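/- Abramov's entropy formula: for the suspension flow S^t over (Σ, σ, μ̃) with integrable ceiling h ≥ α > 0, the entropy of the time-one map of the suspension flow with respect to the suspended measure μ equals h_{μ̃}(σ) / ∫_Σ h dμ̃. -/

import Mathlib

open MeasureTheory Filter

variable {X : Type*} [MeasurableSpace X]

/-- Birkhoff sums of the ceiling function: `birk σ h n x = ∑_{i<n} h(σⁱ x)`. -/
noncomputable def birk (σ : X → X) (h : X → ℝ) (n : ℕ) (x : X) : ℝ :=
  ∑ i ∈ Finset.range n, h (σ^[i] x)

/-- The suspension space `M_h = {(x,t) : 0 ≤ t < h x}`, realized as the fundamental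
domain of `{(x,t) : 0 ≤ t ≤ h x}` under the identification `(x, h x) ∼ (σ x, 0)`. -/
def suspDom (h : X → ℝ) : Set (X × ℝ) := {p | 0 ≤ p.2 ∧ p.2 < h p.1}

/-- `S` implements the time-`s` map of the suspension (semi)flow over `σ` with ceiling
`h`: on the suspension space, `S (x,r) = (σⁿ x, r + s − ∑_{i<n} h(σⁱ x))` where `n` is
the unique nonnegative integer with `∑_{i<n} h(σⁱ x) ≤ r + s < ∑_{i≤n} h(σⁱ x)`. -/
def IsSuspMap (σ : X → X) (h : X → ℝ) (s : ℝ) (S : X × ℝ → X × ℝ) : Prop :=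
  ∀ x r, 0 ≤ r → r < h x → ∃ n : ℕ,
    birk σ h n x ≤ r + s ∧ r + s < birk σ h (n + 1) x ∧
    S (x, r) = (σ^[n] x, r + s - birk σ h n x)

/-- The suspension of the measure `μt` by the ceiling `h`:
`μ = (μt × Leb₁)|_{M_h} / ∫ h dμt`. -/
noncomputable def suspMeasure (μt : Measure X) (h : X → ℝ) : Measure (X × ℝ) :=
  (ENNReal.ofReal (∫ x, h x ∂μt))⁻¹ • ((μt.prod volume).restrict (suspDom h))


variable {M : Type*} [MeasurableSpace M]

/-- A finite measurable partition of `M` modulo `μ`-null sets. -/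
structure FinPart (μ : Measure M) where
  sets : Finset (Set M)
  meas : ∀ A ∈ sets, MeasurableSet A
  cover : μ (⋃₀ (sets : Set (Set M)))ᶜ = 0
  disj : ∀ A ∈ sets, ∀ B ∈ sets, A ≠ B → μ (A ∩ B) = 0

/-- Shannon entropy `H_μ(𝒫) = ∑_{A ∈ 𝒫} −μ(A) log μ(A)` of a finite family of sets. -/
noncomputable def partH (μ : Measure M) (P : Finset (Set M)) : ℝ :=
  ∑ A ∈ P, Real.negMulLog (μ A).toReal

/-- The dynamical refinement: `refineSeq T P n = 𝒫 ∨ T⁻¹𝒫 ∨ ⋯ ∨ T^{-n}𝒫`,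
so that `refineSeq T P (n-1) = 𝒫^{(n)}`. -/
noncomputable def refineSeq (T : M → M) (P : Finset (Set M)) : ℕ → Finset (Set M)
  | 0 => P
  | n + 1 =>
      letI : DecidableEq (Set M) := Classical.decEq _
      ((refineSeq T P n) ×ˢ (P.image fun A => T^[n + 1] ⁻¹' A)).image fun p => p.1 ∩ p.2

/-- The entropy of `T` with respect to the partition `P`:
`h_μ(T,𝒫) = lim (1/n) H_μ(𝒫^{(n)}) = inf_n (1/n) H_μ(𝒫^{(n)})`. -/
noncomputable def partEntropy (μ : Measure M) (T : M → M) (P : Finset (Set M)) : ℝ :=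
  ⨅ n : ℕ, partH μ (refineSeq T P n) / (n + 1)

/-- The Kolmogorov–Sinai (measure-theoretic) entropy of `T` with respect to `μ`, as the
supremum over all finite measurable partitions. -/
noncomputable def ksEntropy (μ : Measure M) (T : M → M) : ℝ :=
  ⨆ P : FinPart μ, partEntropy μ T P.sets

open MeasureTheory Filter
namespace Abr
open Real (negMulLog)
open scoped Topology
set_option linter.unusedSectionVars false
set_option linter.unusedFintypeInType false

/-- Finite-label measurable function. -/
def FM {Ω : Type*} [MeasurableSpace Ω] {α : Type} (f : Ω → α) : Prop :=
  ∀ a, MeasurableSet (f ⁻¹' {a})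

/-- Shannon entropy of a finite labelling. -/
noncomputable def H {Ω : Type*} [MeasurableSpace Ω] {α : Type} [Fintype α]
    (μ : Measure Ω) (f : Ω → α) : ℝ :=
  ∑ a, negMulLog (μ.real (f ⁻¹' {a}))

/-- Conditional entropy. -/
noncomputable def Hc {Ω : Type*} [MeasurableSpace Ω] {α β : Type} [Fintype α] [Fintype β]
    (μ : Measure Ω) (f : Ω → α) (g : Ω → β) : ℝ :=
  H μ (fun x => (f x, g x)) - H μ g

/-- `f` is determined by `g` on `s`. -/
def Det {Ω : Type*} {α β : Type} (s : Set Ω) (f : Ω → α) (g : Ω → β) : Prop :=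
  ∀ x ∈ s, ∀ y ∈ s, g x = g y → f x = f y

section Basic
variable {Ω : Type*} [MeasurableSpace Ω] {α β γ δ : Type}

lemma FM.meas [Finite α] {f : Ω → α} (hf : FM f) (s : Set α) : MeasurableSet (f ⁻¹' s) := by
  have : f ⁻¹' s = ⋃ a ∈ s, f ⁻¹' {a} := by ext x; simp
  rw [this]
  exact MeasurableSet.biUnion (Set.to_countable s) (fun a _ => hf a)

lemma FM.comp [Finite α] {f : Ω → α} (hf : FM f) (φ : α → β) : FM (fun x => φ (f x)) := by
  intro b
  exact hf.meas (φ ⁻¹' {b})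

lemma FM.pair {f : Ω → α} {g : Ω → β} (hf : FM f) (hg : FM g) : FM (fun x => (f x, g x)) := by
  rintro ⟨a, b⟩
  have : (fun x => (f x, g x)) ⁻¹' {(a, b)} = f ⁻¹' {a} ∩ g ⁻¹' {b} := by
    ext x; simp
  rw [this]; exact (hf a).inter (hg b)

lemma FM.pi {ι : Type} [Finite ι] {f : ι → Ω → α} (hf : ∀ i, FM (f i)) :
    FM (fun x => fun i => f i x) := by
  intro w
  have : (fun x => fun i => f i x) ⁻¹' {w} = ⋂ i, f i ⁻¹' {w i} := by
    ext x; simp [funext_iff]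
  rw [this]; exact MeasurableSet.iInter (fun i => hf i _)

lemma FM.comp_meas {Ω' : Type*} [MeasurableSpace Ω'] {f : Ω → α} (hf : FM f) {T : Ω' → Ω}
    (hT : Measurable T) : FM (fun x => f (T x)) := fun a => hT (hf a)

open Classical in
lemma FM.ite {f g : Ω → α} (hf : FM f) (hg : FM g) {E : Set Ω} (hE : MeasurableSet E) :
    FM (fun x => if x ∈ E then f x else g x) := by
  intro a
  have : (fun x => if x ∈ E then f x else g x) ⁻¹' {a}
      = (E ∩ f ⁻¹' {a}) ∪ (Eᶜ ∩ g ⁻¹' {a}) := by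
    ext x; by_cases h : x ∈ E <;> simp [h]
  rw [this]; exact (hE.inter (hf a)).union (hE.compl.inter (hg a))

lemma FM.const (a : α) : FM (fun _ : Ω => a) := by
  intro b
  exact MeasurableSet.preimage (by trivial : MeasurableSet[⊤] _) (@measurable_const _ _ ⊤ _ a)

lemma FM.of_measurable [MeasurableSpace α] [MeasurableSingletonClass α] {f : Ω → α}
    (hf : Measurable f) : FM f := fun a => hf (measurableSet_singleton a)

lemma FM.prop {E : Set Ω} (hE : MeasurableSet E) : FM (fun x => x ∈ E) := by
  intro p
  by_cases hp : p
  · have : (fun x => x ∈ E) ⁻¹' {p} = E := by ext x; simp [hp]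
    rw [this]; exact hE
  · have : (fun x => x ∈ E) ⁻¹' {p} = Eᶜ := by ext x; simp [hp]
    rw [this]; exact hE.compl

variable [Fintype α] [Fintype β] [Fintype γ] [Fintype δ]

lemma sum_real_inter (μ : Measure Ω) [IsFiniteMeasure μ] {f : Ω → α} (hf : FM f)
    (s : Set Ω) : ∑ a, μ.real (f ⁻¹' {a} ∩ s) = μ.real s := by
  have h1 : ∀ a, μ.real (f ⁻¹' {a} ∩ s) = (μ.restrict s).real (f ⁻¹' {a}) := by
    intro a; rw [measureReal_restrict_apply (hf a)]
  simp_rw [h1]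
  rw [← measureReal_biUnion_finset]
  · have : (⋃ a ∈ (Finset.univ : Finset α), f ⁻¹' {a}) = Set.univ := by ext x; simp
    rw [this]; simp
  · intro a _ b _ hab
    refine Disjoint.preimage _ ?_
    simpa using hab
  · intro a _; exact hf a

lemma pre_pair (f : Ω → α) (g : Ω → β) (a : α) (b : β) :
    (fun x => (f x, g x)) ⁻¹' {(a, b)} = f ⁻¹' {a} ∩ g ⁻¹' {b} := by
  ext x; simp

lemma submod_fin (q : α → β → ℝ) (hq : ∀ a b, 0 ≤ q a b) :
    ∑ a, ∑ b, negMulLog (q a b) + negMulLog (∑ a, ∑ b, q a b) ≤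
      ∑ a, negMulLog (∑ b, q a b) + ∑ b, negMulLog (∑ a, q a b) := by
  set r : α → ℝ := fun a => ∑ b, q a b with hr
  set s : β → ℝ := fun b => ∑ a, q a b with hs
  set t : ℝ := ∑ a, r a with ht
  have hts : t = ∑ b, s b := by rw [ht, hr, hs]; exact Finset.sum_comm
  have hqr : ∀ a b, q a b ≤ r a := fun a b =>
    Finset.single_le_sum (f := fun b => q a b) (fun b _ => hq a b) (Finset.mem_univ b)
  have hqs : ∀ a b, q a b ≤ s b := fun a b =>
    Finset.single_le_sum (f := fun a => q a b) (fun a _ => hq a b) (Finset.mem_univ a)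
  have hr0 : ∀ a, 0 ≤ r a := fun a => Finset.sum_nonneg (fun b _ => hq a b)
  have hs0 : ∀ b, 0 ≤ s b := fun b => Finset.sum_nonneg (fun a _ => hq a b)
  have hrt : ∀ a, r a ≤ t := fun a =>
    Finset.single_le_sum (f := r) (fun a _ => hr0 a) (Finset.mem_univ a)
  have h1 : ∑ a, negMulLog (r a) = ∑ a, ∑ b, (- q a b * Real.log (r a)) := by
    refine Finset.sum_congr rfl fun a _ => ?_
    rw [← Finset.sum_mul, Finset.sum_neg_distrib]; rfl
  have h2 : ∑ b, negMulLog (s b) = ∑ a, ∑ b, (- q a b * Real.log (s b)) := by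
    rw [Finset.sum_comm]
    refine Finset.sum_congr rfl fun b _ => ?_
    rw [← Finset.sum_mul, Finset.sum_neg_distrib]; rfl
  have h3 : negMulLog t = ∑ a, ∑ b, (- q a b * Real.log t) := by
    simp_rw [← Finset.sum_mul, Finset.sum_neg_distrib]; rfl
  have hmain : ∀ a b, negMulLog (q a b) + (- q a b * Real.log t) ≤
      (- q a b * Real.log (r a)) + (- q a b * Real.log (s b)) + (r a * s b / t - q a b) := by
    intro a b
    rcases (hq a b).eq_or_lt with h0 | h0
    · rw [← h0]; simp
      exact div_nonneg (mul_nonneg (hr0 a) (hs0 b)) ((hr0 a).trans (hrt a))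
    · have hra : 0 < r a := h0.trans_le (hqr a b)
      have hsb : 0 < s b := h0.trans_le (hqs a b)
      have htt : 0 < t := hra.trans_le (hrt a)
      have hl := Real.log_le_sub_one_of_pos (x := r a * s b / (t * q a b)) (by positivity)
      rw [Real.log_div (by positivity) (by positivity), Real.log_mul hra.ne' hsb.ne',
        Real.log_mul htt.ne' h0.ne'] at hl
      have := mul_le_mul_of_nonneg_left hl h0.le
      have e : q a b * (r a * s b / (t * q a b) - 1) = r a * s b / t - q a b := by
        field_simp
      rw [e] at this
      unfold negMulLog
      nlinarith
  have hsum : ∑ a, ∑ b, (r a * s b / t - q a b) = 0 := by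
    simp_rw [Finset.sum_sub_distrib]
    have : ∑ a, ∑ b, r a * s b / t = t * t / t := by
      simp_rw [← Finset.sum_div, ← Finset.mul_sum, ← hts, ← Finset.sum_mul]; rfl
    rw [this]
    change t * t / t - t = 0
    by_cases h : t = 0
    · simp [h]
    · field_simp; simp
  calc _ = ∑ a, ∑ b, (negMulLog (q a b) + (- q a b * Real.log t)) := by
        rw [h3]; simp_rw [Finset.sum_add_distrib]
    _ ≤ ∑ a, ∑ b, ((- q a b * Real.log (r a)) + (- q a b * Real.log (s b))
          + (r a * s b / t - q a b)) :=
        Finset.sum_le_sum fun a _ => Finset.sum_le_sum fun b _ => hmain a b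
    _ = _ := by
        rw [h1, h2]; simp_rw [Finset.sum_add_distrib]
        rw [hsum]; simp

/-- strong subadditivity -/
lemma Hc_submod (μ : Measure Ω) [IsFiniteMeasure μ] {f : Ω → α} {g : Ω → β} {k : Ω → γ}
    (hf : FM f) (hg : FM g) :
    Hc μ f (fun x => (g x, k x)) ≤ Hc μ f k := by
  unfold Hc H
  simp only [Fintype.sum_prod_type, pre_pair]
  set p : γ → α → β → ℝ := fun c a b => μ.real (f ⁻¹' {a} ∩ (g ⁻¹' {b} ∩ k ⁻¹' {c})) with hp
  have e1 : ∀ b c, μ.real (g ⁻¹' {b} ∩ k ⁻¹' {c}) = ∑ a, p c a b := fun b c =>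
    (sum_real_inter μ hf _).symm
  have e2 : ∀ a c, μ.real (f ⁻¹' {a} ∩ k ⁻¹' {c}) = ∑ b, p c a b := fun a c => by
    rw [← sum_real_inter μ hg]
    refine Finset.sum_congr rfl fun b _ => ?_
    simp only [hp]; congr 1; ext x; simp; tauto
  have e3 : ∀ c, μ.real (k ⁻¹' {c}) = ∑ a, ∑ b, p c a b := fun c => by
    rw [← sum_real_inter μ hf]; simp_rw [e2]
  have := Finset.sum_le_sum (s := Finset.univ) fun c (_ : c ∈ Finset.univ) =>
    submod_fin (p c) (fun a b => measureReal_nonneg)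
  simp only [Finset.sum_add_distrib] at this
  simp only [e1, e2, e3]
  have c1 : ∑ a, ∑ b, ∑ c, negMulLog (p c a b) = ∑ c, ∑ a, ∑ b, negMulLog (p c a b) := by
    rw [Finset.sum_comm' (t' := Finset.univ) (s' := fun _ => Finset.univ) (by simp)]
    conv_rhs => rw [Finset.sum_comm]
    rw [Finset.sum_comm]
    refine Finset.sum_congr rfl fun a _ => ?_
    rw [Finset.sum_comm]
  change ∑ a, ∑ b, ∑ c, negMulLog (p c a b) - _ ≤ _
  rw [c1]
  rw [Finset.sum_comm (s := (Finset.univ : Finset β)),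
    Finset.sum_comm (s := (Finset.univ : Finset α)) (t := (Finset.univ : Finset γ))
      (f := fun a c => negMulLog (∑ b, p c a b))]
  linarith

lemma H_comm (μ : Measure Ω) (f : Ω → α) (g : Ω → β) :
    H μ (fun x => (f x, g x)) = H μ (fun x => (g x, f x)) := by
  unfold H
  simp only [Fintype.sum_prod_type, pre_pair]
  rw [Finset.sum_comm]
  simp_rw [Set.inter_comm]

lemma H_pair_of_det {μ : Measure Ω} {s : Set Ω} (hs : μ sᶜ = 0) {f : Ω → α} {g : Ω → β}
    (hd : Det s f g) : H μ (fun x => (f x, g x)) = H μ g := by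
  unfold H
  simp only [Fintype.sum_prod_type_right, pre_pair]
  refine Finset.sum_congr rfl fun b _ => ?_
  by_cases hx : ∃ x ∈ s, g x = b
  · obtain ⟨x, hxs, rfl⟩ := hx
    rw [Finset.sum_eq_single (f x)]
    · congr 1
      refine measureReal_congr ?_
      have : s ∈ ae μ := hs
      filter_upwards [this] with y hy
      apply propext
      change (_ ∧ _) ↔ _
      refine ⟨fun h => h.2, fun h => ⟨hd y hy x hxs h, h⟩⟩
    · intro a _ ha
      have : μ (f ⁻¹' {a} ∩ g ⁻¹' {g x}) = 0 := by
        refine measure_mono_null ?_ hs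
        rintro y ⟨hy1, hy2⟩ hys
        apply ha
        rw [← (show f y = a from hy1)]
        exact hd y hys x hxs hy2
      simp [Measure.real, this]
    · simp
  · push Not at hx
    have h0 : μ (g ⁻¹' {b}) = 0 := by
      refine measure_mono_null ?_ hs
      intro y hy hys
      exact hx y hys hy
    have h1 : ∀ a, μ (f ⁻¹' {a} ∩ g ⁻¹' {b}) = 0 := fun a =>
      measure_mono_null Set.inter_subset_right h0
    simp [Measure.real, h0, h1]

lemma H_congr_det {μ : Measure Ω} {s : Set Ω} (hs : μ sᶜ = 0) {f : Ω → α} {g : Ω → β}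
    (h1 : Det s f g) (h2 : Det s g f) : H μ f = H μ g := by
  rw [← H_pair_of_det hs h1, ← H_pair_of_det hs h2, H_comm]

lemma Hc_congr_right {μ : Measure Ω} {s : Set Ω} (hs : μ sᶜ = 0) {f : Ω → α} {g : Ω → β}
    {k : Ω → γ} (h1 : Det s g k) (h2 : Det s k g) : Hc μ f g = Hc μ f k := by
  unfold Hc
  rw [H_congr_det hs h1 h2, H_congr_det hs (f := fun x => (f x, g x)) (g := fun x => (f x, k x))]
  · intro x hx y hy h; simp only [Prod.mk.injEq] at h ⊢; exact ⟨h.1, h1 x hx y hy h.2⟩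
  · intro x hx y hy h; simp only [Prod.mk.injEq] at h ⊢; exact ⟨h.1, h2 x hx y hy h.2⟩

lemma Hc_of_det {μ : Measure Ω} {s : Set Ω} (hs : μ sᶜ = 0) {f : Ω → α} {g : Ω → β}
    (hd : Det s f g) : Hc μ f g = 0 := by
  unfold Hc; rw [H_pair_of_det hs hd, sub_self]

lemma Hc_chain (μ : Measure Ω) (f : Ω → α) (g : Ω → β) (k : Ω → γ) :
    Hc μ (fun x => (f x, g x)) k = Hc μ f (fun x => (g x, k x)) + Hc μ g k := by
  unfold Hc
  rw [H_congr_det (μ := μ) (s := Set.univ) (by simp) (f := fun x => ((f x, g x), k x))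
    (g := fun x => (f x, g x, k x))]
  · ring
  · intro x _ y _ h; simp_all
  · intro x _ y _ h; simp_all

/-- conditioning on more decreases entropy: `k` is determined by `g`. -/
lemma Hc_anti {μ : Measure Ω} [IsFiniteMeasure μ] {s : Set Ω} (hs : μ sᶜ = 0)
    {f : Ω → α} {g : Ω → β} {k : Ω → γ} (hf : FM f) (hg : FM g) (hd : Det s k g) :
    Hc μ f g ≤ Hc μ f k := by
  rw [Hc_congr_right hs (f := f) (g := g) (k := fun x => (g x, k x))]
  · exact Hc_submod μ hf hg
  · intro x _ y _ h; simp_all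
  · intro x hx y hy h; simp only [Prod.mk.injEq]; exact ⟨h, hd x hx y hy h⟩

lemma Hc_nonneg {μ : Measure Ω} [IsFiniteMeasure μ] {f : Ω → α} {g : Ω → β} (hf : FM f)
    (hg : FM g) : 0 ≤ Hc μ f g := by
  have h := Hc_anti (μ := μ) (s := Set.univ) (by simp) hf (hf.pair hg) (k := g)
    (by intro x _ y _ h; simp_all)
  rwa [Hc_of_det (s := Set.univ) (by simp)] at h
  intro x _ y _ h; simp_all

lemma Hc_mono {μ : Measure Ω} [IsFiniteMeasure μ] {s : Set Ω} (hs : μ sᶜ = 0)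
    {f : Ω → α} {f' : Ω → β} {g : Ω → γ} (hf : FM f) (hf' : FM f') (hg : FM g)
    (hd : Det s f (fun x => (f' x, g x))) : Hc μ f g ≤ Hc μ f' g := by
  have e1 := Hc_chain μ f f' g
  have e2 := Hc_chain μ f' f g
  have e3 : Hc μ (fun x => (f x, f' x)) g = Hc μ (fun x => (f' x, f x)) g := by
    unfold Hc; congr 1
    refine H_congr_det (s := Set.univ) (by simp) ?_ ?_ <;> (intro x _ y _ h; simp_all)
  have e4 := Hc_of_det hs hd
  have := Hc_nonneg (μ := μ) hf' (hf.pair hg)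
  linarith

lemma Hc_pair_le {μ : Measure Ω} [IsFiniteMeasure μ]
    {f : Ω → α} {f' : Ω → β} {g : Ω → γ} (hf : FM f) (hf' : FM f') :
    Hc μ (fun x => (f x, f' x)) g ≤ Hc μ f g + Hc μ f' g := by
  have e1 := Hc_chain μ f f' g
  have := Hc_submod μ (k := g) hf hf'
  linarith

lemma Hc_triangle {μ : Measure Ω} [IsFiniteMeasure μ]
    {f : Ω → α} {g : Ω → β} {k : Ω → γ} (hf : FM f) (hg : FM g) (hk : FM k) :
    Hc μ f k ≤ Hc μ f g + Hc μ g k := by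
  have e1 := Hc_chain μ f g k
  have h1 := Hc_mono (μ := μ) (s := Set.univ) (by simp) (f := f) (f' := fun x => (f x, g x))
    (g := k) hf (hf.pair hg) hk (by intro x _ y _ h; simp_all)
  have h2 := Hc_anti (μ := μ) (s := Set.univ) (by simp) (f := f) (g := fun x => (g x, k x))
    (k := g) hf (hg.pair hk) (by intro x _ y _ h; simp_all)
  linarith

lemma Hc_pi_le {μ : Measure Ω} [IsFiniteMeasure μ] (n : ℕ)
    {f : Fin n → Ω → α} {g : Ω → γ} (hf : ∀ i, FM (f i)) (hg : FM g) :
    Hc μ (fun x => fun i => f i x) g ≤ ∑ i, Hc μ (f i) g := by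
  induction n with
  | zero =>
    simp
    rw [Hc_of_det (s := Set.univ) (by simp)]
    intro x _ y _ _; exact Subsingleton.elim _ _
  | succ n ih =>
    rw [Fin.sum_univ_succ]
    have h1 := ih (f := fun i => f i.succ) (fun i => hf i.succ)
    have h2 := Hc_pair_le (μ := μ) (g := g) (hf 0) (FM.pi (f := fun i => f (Fin.succ i))
      (fun i => hf i.succ))
    have h3 := Hc_mono (μ := μ) (s := Set.univ) (by simp) (f := fun x => fun i => f i x)
      (f' := fun x => (f 0 x, fun i => f (Fin.succ i) x)) (g := g) (FM.pi hf)
      ((hf 0).pair (FM.pi (f := fun i => f (Fin.succ i)) (fun i => hf i.succ))) hg (by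
        intro x _ y _ h
        simp only [Prod.mk.injEq, funext_iff] at h
        funext i
        refine Fin.cases h.1.1 h.1.2 i)
    linarith

/-- relative to trivial -/
lemma Hc_le_H {μ : Measure Ω} [IsFiniteMeasure μ] {f : Ω → α} {g : Ω → β} (hf : FM f)
    (hg : FM g) : Hc μ f g ≤ H μ f - negMulLog (μ.real Set.univ) := by
  have h := Hc_anti (μ := μ) (s := Set.univ) (by simp) hf hg (k := fun _ => ())
    (by intro x _ y _ h; rfl)
  refine h.trans (le_of_eq ?_)
  unfold Hc
  rw [H_congr_det (μ := μ) (s := Set.univ) (by simp) (f := fun x => (f x, ())) (g := f)]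
  · congr 1
    simp [H]
  · intro x _ y _ h; simp_all
  · intro x _ y _ h; simp_all

lemma H_le_log {μ : Measure Ω} [IsFiniteMeasure μ] {f : Ω → α} (hf : FM f) :
    H μ f - negMulLog (μ.real Set.univ) ≤ μ.real Set.univ * Real.log (Fintype.card α) := by
  have ht : ∑ a, μ.real (f ⁻¹' {a}) = μ.real Set.univ := by
    simpa using sum_real_inter μ hf Set.univ
  set t := μ.real Set.univ with htdef
  have ht0 : 0 ≤ t := measureReal_nonneg
  rcases ht0.eq_or_lt with h0 | h0
  · have : ∀ a, μ.real (f ⁻¹' {a}) = 0 := fun a =>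
      le_antisymm ((measureReal_mono (Set.subset_univ _)).trans h0.symm.le) measureReal_nonneg
    rw [← h0]; simp [H, this]
  · have hne : Nonempty α := by
      by_contra hc
      rw [not_nonempty_iff] at hc
      simp at ht; linarith
    have hn : (0 : ℝ) < Fintype.card α := by exact_mod_cast Fintype.card_pos
    have key : ∀ a, negMulLog (μ.real (f ⁻¹' {a})) ≤
        μ.real (f ⁻¹' {a}) * (Real.log (Fintype.card α) - Real.log t)
          + (t / Fintype.card α - μ.real (f ⁻¹' {a})) := by
      intro a
      rcases (measureReal_nonneg (μ := μ) (s := f ⁻¹' {a})).eq_or_lt with h1 | h1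
      · rw [← h1]; simp; positivity
      · set p := μ.real (f ⁻¹' {a})
        have hl := Real.log_le_sub_one_of_pos (x := t / (Fintype.card α * p)) (by positivity)
        rw [Real.log_div (by positivity) (by positivity), Real.log_mul hn.ne' h1.ne'] at hl
        have := mul_le_mul_of_nonneg_left hl h1.le
        have e : p * (t / (Fintype.card α * p) - 1) = t / Fintype.card α - p := by
          field_simp
        rw [e] at this
        unfold negMulLog
        nlinarith
    have := Finset.sum_le_sum (s := Finset.univ) fun a (_ : a ∈ Finset.univ) => key a
    rw [Finset.sum_add_distrib, ← Finset.sum_mul, Finset.sum_sub_distrib, ht] at this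
    simp only [Finset.sum_const, Finset.card_univ, nsmul_eq_mul] at this
    rw [mul_div_cancel₀ _ hn.ne'] at this
    unfold H negMulLog at *
    linarith

lemma H_map {Ω' : Type*} [MeasurableSpace Ω'] (μ : Measure Ω) {T : Ω → Ω'}
    (hT : Measurable T) {f : Ω' → α} (hf : FM f) :
    H (μ.map T) f = H μ (fun x => f (T x)) := by
  unfold H
  refine Finset.sum_congr rfl fun a _ => ?_
  rw [map_measureReal_apply hT (hf a)]; rfl

lemma Hc_map {Ω' : Type*} [MeasurableSpace Ω'] (μ : Measure Ω) {T : Ω → Ω'}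
    (hT : Measurable T) {f : Ω' → α} {g : Ω' → β} (hf : FM f) (hg : FM g) :
    Hc (μ.map T) f g = Hc μ (fun x => f (T x)) (fun x => g (T x)) := by
  unfold Hc; rw [H_map μ hT hg, H_map μ hT (hf.pair hg)]

lemma Hc_smul (μ : Measure Ω) [IsFiniteMeasure μ] (c : ENNReal)
    {f : Ω → α} {g : Ω → β} (hf : FM f) :
    Hc (c • μ) f g = c.toReal * Hc μ f g := by
  unfold Hc H
  simp only [measureReal_ennreal_smul_apply, Real.negMulLog_mul, Finset.sum_add_distrib,
    ← Finset.mul_sum, ← Finset.sum_mul]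
  have : ∑ x : α × β, μ.real ((fun x => (f x, g x)) ⁻¹' {x}) = ∑ b, μ.real (g ⁻¹' {b}) := by
    rw [Fintype.sum_prod_type_right]
    simp only [pre_pair, sum_real_inter μ hf]
  rw [this]; ring

lemma Hc_restrict {μ : Measure Ω} [IsFiniteMeasure μ] {f : Ω → α} {g : Ω → β} (hf : FM f)
    (hg : FM g) (V : Set β) :
    Hc μ f g = Hc (μ.restrict (g ⁻¹' V)) f g + Hc (μ.restrict (g ⁻¹' V)ᶜ) f g := by
  classical
  have hm := hg.meas V
  have key : ∀ (s : Set Ω) (b : β), s ⊆ g ⁻¹' {b} →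
      negMulLog (μ.real s) = negMulLog ((μ.restrict (g ⁻¹' V)).real s) +
        negMulLog ((μ.restrict (g ⁻¹' V)ᶜ).real s) := by
    intro s b hs
    rw [measureReal_restrict_apply' hm,
      measureReal_restrict_apply' hm.compl]
    by_cases hb : b ∈ V
    · have h1 : s ∩ g ⁻¹' V = s := Set.inter_eq_left.2 (fun x hx => by
        have : g x = b := hs hx
        change g x ∈ V; rwa [this])
      have h2 : s ∩ (g ⁻¹' V)ᶜ = ∅ := by
        ext x; simp only [Set.mem_inter_iff, Set.mem_compl_iff, Set.mem_preimage,
          Set.mem_empty_iff_false, iff_false, not_and, not_not]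
        intro hx
        have : g x = b := hs hx
        rwa [this]
      rw [h1, h2]; simp
    · have h2 : s ∩ g ⁻¹' V = ∅ := by
        ext x; simp only [Set.mem_inter_iff, Set.mem_preimage,
          Set.mem_empty_iff_false, iff_false, not_and]
        intro hx
        have : g x = b := hs hx
        rwa [this]
      have h1 : s ∩ (g ⁻¹' V)ᶜ = s := Set.inter_eq_left.2 (fun x hx => by
        have : g x = b := hs hx
        change g x ∉ V; rwa [this])
      rw [h1, h2]; simp
  unfold Hc H
  rw [Finset.sum_congr rfl (fun p _ => key ((fun x => (f x, g x)) ⁻¹' {p}) p.2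
      (by intro x hx; simp only [Set.mem_preimage, Set.mem_singleton_iff] at hx ⊢
          rw [← hx])),
    Finset.sum_congr rfl (fun b _ => key (g ⁻¹' {b}) b le_rfl)]
  simp only [Finset.sum_add_distrib]
  ring

open Classical in
/-- restrict a label to a set -/
noncomputable def ind (E : Set Ω) (f : Ω → α) : Ω → Option α := fun x => if x ∈ E then some (f x) else none

lemma ind_of_mem {E : Set Ω} {f : Ω → α} {x} (h : x ∈ E) : ind E f x = some (f x) := by simp [ind, h]
lemma ind_of_notMem {E : Set Ω} {f : Ω → α} {x} (h : x ∉ E) : ind E f x = none := by simp [ind, h]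

lemma FM.ind {E : Set Ω} (hE : MeasurableSet E) {f : Ω → α} (hf : FM f) : FM (ind E f) :=
  (hf.comp some).ite (FM.const none) hE

/-- if `f` is determined by `g` off `E`, the conditional entropy is controlled by `ind E f`. -/
lemma Hc_le_ind {μ : Measure Ω} [IsFiniteMeasure μ] {s : Set Ω} (hs : μ sᶜ = 0)
    {E : Set Ω} (hE : MeasurableSet E) {f : Ω → α} {g : Ω → β} (hf : FM f) (hg : FM g)
    (hd : Det (s \ E) f g) : Hc μ f g ≤ H μ (ind E f) - negMulLog (μ.real Set.univ) := by
  refine (Hc_mono hs hf (hf.ind hE) hg ?_).trans (Hc_le_H (hf.ind hE) hg)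
  intro x hx y hy h
  simp only [Prod.mk.injEq] at h
  by_cases h1 : x ∈ E <;> by_cases h2 : y ∈ E
  · simpa [ind, h1, h2] using h.1
  · simp [ind, h1, h2] at h
  · simp [ind, h1, h2] at h
  · exact hd x ⟨hx, h1⟩ y ⟨hy, h2⟩ h.2

lemma tendsto_ind {μ : Measure Ω} [IsFiniteMeasure μ] {E : ℕ → Set Ω}
    (hE : ∀ n, MeasurableSet (E n)) {f : Ω → α}
    (h0 : Tendsto (fun n => μ.real (E n)) atTop (𝓝 0)) :
    Tendsto (fun n => H μ (ind (E n) f) - negMulLog (μ.real Set.univ)) atTop (𝓝 0) := by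
  have e : ∀ n, H μ (ind (E n) f) = negMulLog (μ.real Set.univ - μ.real (E n)) +
      ∑ a, negMulLog (μ.real (E n ∩ f ⁻¹' {a})) := by
    intro n
    unfold H
    rw [Fintype.sum_option]
    congr 1
    · rw [← measureReal_compl (hE n)]
      congr 2; ext x; by_cases h : x ∈ E n <;> simp [ind, h]
    · refine Finset.sum_congr rfl fun a _ => ?_
      congr 2; ext x; by_cases h : x ∈ E n <;> simp [ind, h]
  simp_rw [e]
  have t1 : Tendsto (fun n => negMulLog (μ.real Set.univ - μ.real (E n))) atTop
      (𝓝 (negMulLog (μ.real Set.univ))) := by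
    refine (Real.continuous_negMulLog.tendsto _).comp ?_
    simpa using tendsto_const_nhds.sub h0
  have t2 : Tendsto (fun n => ∑ a, negMulLog (μ.real (E n ∩ f ⁻¹' {a}))) atTop (𝓝 0) := by
    rw [show (0 : ℝ) = ∑ a : α, (0 : ℝ) by simp]
    refine tendsto_finsetSum _ fun a _ => ?_
    have : Tendsto (fun n => μ.real (E n ∩ f ⁻¹' {a})) atTop (𝓝 0) :=
      squeeze_zero (fun n => measureReal_nonneg)
        (fun n => measureReal_mono Set.inter_subset_left) h0
    have h2 := (Real.continuous_negMulLog.tendsto 0).comp this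
    rw [Real.negMulLog_zero] at h2
    exact h2
  simpa using (t1.add t2).sub_const (negMulLog (μ.real Set.univ))

end Basic
end Abr

open MeasureTheory Filter
namespace Abr
open Real (negMulLog)
open scoped Topology
set_option linter.unusedSectionVars false
set_option linter.unusedFintypeInType false

/-- the `n`-name of a point -/
def name {Ω : Type*} {α : Type} (T : Ω → Ω) (f : Ω → α) (n : ℕ) : Ω → (Fin n → α) :=
  fun x i => f (T^[i] x)

/-- entropy of a labelling, for an arbitrary finite invariant measure -/
noncomputable def hh {Ω : Type*} [MeasurableSpace Ω] {α : Type} [Fintype α]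
    (μ : Measure Ω) (T : Ω → Ω) (f : Ω → α) : ℝ :=
  ⨅ n : ℕ, Hc μ f (fun x => name T f n (T x))

/-- KS entropy in `ℝ≥0∞`. -/
noncomputable def ent {Ω : Type*} [MeasurableSpace Ω] (μ : Measure Ω) (T : Ω → Ω) : ENNReal :=
  ⨆ (n : ℕ) (f : Ω → Fin n) (_ : FM f), ENNReal.ofReal (hh μ T f)

section Dyn
variable {Ω : Type*} [MeasurableSpace Ω] {α β γ δ : Type}
variable [Fintype α] [Fintype β] [Fintype γ] [Fintype δ]
variable {μ : Measure Ω} [IsFiniteMeasure μ] {T : Ω → Ω}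

lemma FM.name {f : Ω → α} (hf : FM f) (hT : Measurable T) (n : ℕ) : FM (name T f n) :=
  FM.pi (f := fun (i : Fin n) x => f (T^[i] x)) fun i => hf.comp_meas (hT.iterate i)

lemma name_eq_iff {f : Ω → α} {n : ℕ} {x y : Ω} :
    name T f n x = name T f n y ↔ ∀ i < n, f (T^[i] x) = f (T^[i] y) := by
  constructor
  · intro h i hi; exact congrFun h ⟨i, hi⟩
  · intro h; funext i; exact h i i.2

lemma H_inv (hT : MeasurePreserving T μ μ) {f : Ω → α} (hf : FM f) :
    H μ (fun x => f (T x)) = H μ f := by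
  conv_rhs => rw [← hT.map_eq]
  rw [H_map μ hT.measurable hf]

lemma Hc_inv (hT : MeasurePreserving T μ μ) {f : Ω → α} {g : Ω → β} (hf : FM f) (hg : FM g) :
    Hc μ (fun x => f (T x)) (fun x => g (T x)) = Hc μ f g := by
  conv_rhs => rw [← hT.map_eq]
  rw [Hc_map μ hT.measurable hf hg]

lemma H_name_succ (hT : MeasurePreserving T μ μ) {f : Ω → α} (hf : FM f) (n : ℕ) :
    H μ (name T f (n + 1)) = Hc μ f (fun x => name T f n (T x)) + H μ (name T f n) := by
  rw [← H_inv hT (hf.name hT.measurable n)]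
  unfold Hc
  rw [H_congr_det (μ := μ) (s := Set.univ) (by simp) (f := name T f (n + 1))
    (g := fun x => (f x, name T f n (T x)))]
  · ring
  · intro x _ y _ h
    simp only [Prod.mk.injEq, name_eq_iff] at h
    rw [name_eq_iff]
    rintro (_ | i) hi
    · exact h.1
    · exact h.2 i (by omega)
  · intro x _ y _ h
    rw [name_eq_iff] at h
    simp only [Prod.mk.injEq, name_eq_iff]
    exact ⟨h 0 (by omega), fun i hi => h (i + 1) (by omega)⟩

lemma d_anti (hT : Measurable T) {f : Ω → α} (hf : FM f) :
    Antitone fun n => Hc μ f (fun x => name T f n (T x)) := by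
  refine antitone_nat_of_succ_le fun n => ?_
  refine Hc_anti (s := Set.univ) (by simp) hf ((hf.name hT (n + 1)).comp_meas hT) ?_
  intro x _ y _ h
  rw [name_eq_iff] at h ⊢
  exact fun i hi => h i (by omega)

lemma d_nonneg (hT : Measurable T) {f : Ω → α} (hf : FM f) (n : ℕ) :
    0 ≤ Hc μ f (fun x => name T f n (T x)) :=
  Hc_nonneg hf ((hf.name hT n).comp_meas hT)

lemma hh_nonneg (hT : Measurable T) {f : Ω → α} (hf : FM f) : 0 ≤ hh μ T f :=
  le_ciInf fun n => d_nonneg hT hf n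

lemma hh_le (hT : Measurable T) {f : Ω → α} (hf : FM f) (n : ℕ) :
    hh μ T f ≤ Hc μ f (fun x => name T f n (T x)) :=
  ciInf_le ⟨0, by rintro _ ⟨n, rfl⟩; exact d_nonneg hT hf n⟩ n

lemma tendsto_d (hT : Measurable T) {f : Ω → α} (hf : FM f) :
    Tendsto (fun n => Hc μ f (fun x => name T f n (T x))) atTop (𝓝 (hh μ T f)) :=
  tendsto_atTop_ciInf (d_anti hT hf) ⟨0, by rintro _ ⟨n, rfl⟩; exact d_nonneg hT hf n⟩

lemma H_name_eq (hT : MeasurePreserving T μ μ) {f : Ω → α} (hf : FM f) (n : ℕ) :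
    H μ (name T f n) = negMulLog (μ.real Set.univ)
      + ∑ i ∈ Finset.range n, Hc μ f (fun x => name T f i (T x)) := by
  induction n with
  | zero =>
    simp [H]
    congr 2
    ext x; simp
    exact Subsingleton.elim _ _
  | succ n ih => rw [H_name_succ hT hf, ih, Finset.sum_range_succ]; ring

lemma tendsto_name (hT : MeasurePreserving T μ μ) {f : Ω → α} (hf : FM f) :
    Tendsto (fun n : ℕ => H μ (name T f n) / n) atTop (𝓝 (hh μ T f)) := by
  have h1 := (tendsto_d (μ := μ) hT.measurable hf).cesaro
  have h2 := tendsto_const_div_atTop_nhds_zero_nat (negMulLog (μ.real Set.univ))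
  have := h2.add h1
  rw [zero_add] at this
  refine this.congr fun n => ?_
  rw [H_name_eq hT hf]; ring

lemma hh_le_add (hT : MeasurePreserving T μ μ) {f : Ω → α} {g : Ω → β} (hf : FM f)
    (hg : FM g) : hh μ T f ≤ hh μ T g + Hc μ f g := by
  refine le_of_tendsto_of_tendsto (tendsto_name hT hf)
    ((tendsto_name hT hg).add tendsto_const_nhds) ?_
  filter_upwards [eventually_gt_atTop 0] with n hn
  have hn' : (0 : ℝ) < n := by exact_mod_cast hn
  rw [div_le_iff₀ hn', add_mul, div_mul_cancel₀ _ hn'.ne']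
  have hgn := hg.name hT.measurable n
  have hfn := hf.name hT.measurable n
  have h1 : H μ (name T f n) ≤ H μ (name T g n) + Hc μ (name T f n) (name T g n) := by
    have := Hc_nonneg (μ := μ) hgn hfn
    unfold Hc at *
    rw [H_comm] at this
    linarith
  have h2 : Hc μ (name T f n) (name T g n) ≤ ∑ i : Fin n, Hc μ (fun x => f (T^[i] x)) (name T g n) :=
    Hc_pi_le n (f := fun (i : Fin n) x => f (T^[i] x))
      (fun i => hf.comp_meas (hT.measurable.iterate i)) hgn
  have h3 : ∀ i : Fin n, Hc μ (fun x => f (T^[i] x)) (name T g n) ≤ Hc μ f g := by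
    intro i
    rw [← Hc_inv (hT.iterate i) hf hg]
    refine Hc_anti (s := Set.univ) (by simp) (hf.comp_meas (hT.measurable.iterate i)) hgn ?_
    intro x _ y _ h
    exact name_eq_iff.1 h i i.2
  have h4 := Finset.sum_le_sum (s := Finset.univ) fun i (_ : i ∈ Finset.univ) => h3 i
  simp at h4
  linarith

lemma hh_mono (hT : MeasurePreserving T μ μ) {s : Set Ω} (hs : μ sᶜ = 0)
    {f : Ω → α} {g : Ω → β} (hf : FM f) (hg : FM g) (hd : Det s f g) :
    hh μ T f ≤ hh μ T g := by
  have := hh_le_add (μ := μ) hT hf hg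
  rwa [Hc_of_det hs hd, add_zero] at this

lemma hh_pow (hT : MeasurePreserving T μ μ) {f : Ω → α} (hf : FM f) {m : ℕ} (hm : 0 < m) :
    hh μ (T^[m]) (name T f m) = m * hh μ T f := by
  have h1 := tendsto_name (μ := μ) (hT.iterate m) (hf.name hT.measurable m)
  have h2 : Tendsto (fun n : ℕ => m * (H μ (name T f (m * n)) / (m * n : ℕ))) atTop
      (𝓝 (m * hh μ T f)) :=
    ((tendsto_name hT hf).comp (tendsto_id.const_mul_atTop' hm)).const_mul _
  refine tendsto_nhds_unique h1 (h2.congr fun n => ?_)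
  have e : H μ (name T f (m * n)) = H μ (name (T^[m]) (name T f m) n) := by
    refine H_congr_det (s := Set.univ) (by simp) ?_ ?_
    · intro x _ y _ h
      rw [name_eq_iff] at h ⊢
      intro i hi
      have h3 := h (i / m) (Nat.div_lt_of_lt_mul hi)
      rw [name_eq_iff] at h3
      have h4 := h3 (i % m) (Nat.mod_lt _ hm)
      simp only [← Function.iterate_mul, ← Function.iterate_add_apply, Nat.mod_add_div] at h4
      exact h4
    · intro x _ y _ h
      rw [name_eq_iff] at h ⊢
      intro i hi
      rw [name_eq_iff]
      intro j hj
      simp only [← Function.iterate_mul, ← Function.iterate_add_apply]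
      apply h
      calc j + m * i < m + m * i := by omega
        _ = m * (i + 1) := by ring
        _ ≤ m * n := Nat.mul_le_mul_left _ hi
  rw [e]
  have : (m : ℝ) ≠ 0 := by positivity
  push_cast
  rw [mul_div_assoc', mul_div_mul_left _ _ this]

lemma hh_smul {f : Ω → α} (hf : FM f) (c : ENNReal) :
    hh (c • μ) T f = c.toReal * hh μ T f := by
  unfold hh
  rw [Real.mul_iInf_of_nonneg ENNReal.toReal_nonneg]
  simp_rw [Hc_smul μ c hf]

lemma hh_factor {Ω' : Type*} [MeasurableSpace Ω'] {π : Ω → Ω'} {S : Ω' → Ω'} {D : Set Ω}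
    (hπ : Measurable π) (hS : Measurable S)
    (hD : μ Dᶜ = 0) (hDT : ∀ x ∈ D, T x ∈ D) (hc : ∀ x ∈ D, π (T x) = S (π x))
    {f : Ω' → α} (hf : FM f) :
    hh (μ.map π) S f = hh μ T (fun x => f (π x)) := by
  have hit : ∀ n, ∀ x ∈ D, S^[n] (π x) = π (T^[n] x) := by
    intro n
    induction n with
    | zero => intro x _; rfl
    | succ n ih => intro x hx; rw [Function.iterate_succ_apply, ← hc x hx, ih _ (hDT x hx)]; rfl
  unfold hh
  congr 1; funext n
  rw [Hc_map μ hπ hf ((hf.name hS n).comp_meas hS)]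
  have key : ∀ x ∈ D, name S f n (S (π x)) = name T (fun x => f (π x)) n (T x) := by
    intro x hx
    funext i
    simp only [name]
    rw [← hc x hx, hit _ _ (hDT x hx)]
  refine Hc_congr_right hD ?_ ?_
  · intro x hx y hy h
    change name S f n (S (π x)) = name S f n (S (π y))
    rw [key x hx, key y hy]; exact h
  · intro x hx y hy h
    change name S f n (S (π x)) = name S f n (S (π y)) at h
    rw [key x hx, key y hy] at h; exact h

lemma le_ent (hT : MeasurePreserving T μ μ) {f : Ω → α} (hf : FM f) :
    ENNReal.ofReal (hh μ T f) ≤ ent μ T := by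
  have hf' : FM (fun x => Fintype.equivFin α (f x)) := hf.comp _
  refine le_trans ?_ (le_iSup_of_le _ (le_iSup_of_le _ (le_iSup_of_le hf' le_rfl)))
  refine ENNReal.ofReal_le_ofReal (hh_mono hT (s := Set.univ) (by simp) hf hf' ?_)
  intro x _ y _ h
  simpa using h

lemma ent_le {C : ENNReal}
    (h : ∀ (n : ℕ) (f : Ω → Fin n), FM f → ∀ ε : ℝ, 0 < ε →
      ENNReal.ofReal (hh μ T f) ≤ C + ENNReal.ofReal ε) : ent μ T ≤ C := by
  refine iSup_le fun n => iSup_le fun f => iSup_le fun hf => ?_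
  refine ENNReal.le_of_forall_pos_le_add fun ε hε _ => ?_
  have := h n f hf ε (by exact_mod_cast hε)
  simpa using this

lemma ent_pow (hT : MeasurePreserving T μ μ) {m : ℕ} (hm : 0 < m) :
    ent μ (T^[m]) = m * ent μ T := by
  apply le_antisymm
  · refine iSup_le fun n => iSup_le fun f => iSup_le fun hf => ?_
    have h1 := hh_mono (hT.iterate m) (s := Set.univ) (by simp) hf (hf.name hT.measurable m)
      (by intro x _ y _ h; exact name_eq_iff.1 h 0 hm)
    rw [hh_pow hT hf hm] at h1
    refine (ENNReal.ofReal_le_ofReal h1).trans ?_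
    rw [ENNReal.ofReal_mul (by positivity), ENNReal.ofReal_natCast]
    gcongr
    exact le_ent hT hf
  · unfold ent
    simp_rw [ENNReal.mul_iSup]
    refine iSup_le fun n => iSup_le fun f => iSup_le fun hf => ?_
    rw [← ENNReal.ofReal_natCast, ← ENNReal.ofReal_mul (by positivity), ← hh_pow hT hf hm]
    exact le_ent (hT.iterate m) (hf.name hT.measurable m)

lemma ent_smul {c : ENNReal} (hc : c ≠ ⊤) :
    ent (c • μ) T = c * ent μ T := by
  unfold ent
  simp_rw [ENNReal.mul_iSup]
  refine iSup_congr fun n => iSup_congr fun f => iSup_congr fun hf => ?_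
  rw [hh_smul hf, ENNReal.ofReal_mul ENNReal.toReal_nonneg, ENNReal.ofReal_toReal hc]

lemma ent_factor_le {Ω' : Type*} [MeasurableSpace Ω'] {π : Ω → Ω'} {S : Ω' → Ω'} {D : Set Ω}
    (hT : MeasurePreserving T μ μ)
    (hπ : Measurable π) (hS : Measurable S)
    (hD : μ Dᶜ = 0) (hDT : ∀ x ∈ D, T x ∈ D) (hc : ∀ x ∈ D, π (T x) = S (π x)) :
    ent (μ.map π) S ≤ ent μ T := by
  refine iSup_le fun n => iSup_le fun f => iSup_le fun hf => ?_
  rw [hh_factor hπ hS hD hDT hc hf]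
  exact le_ent hT (hf.comp_meas hπ)

end Dyn
end Abr

open MeasureTheory Filter
namespace Abr
open Real (negMulLog)
open scoped Topology
set_option linter.unusedSectionVars false
set_option linter.unusedFintypeInType false

section Bridge
variable {Ω : Type*} [MeasurableSpace Ω] {α : Type} [Fintype α]
variable {μ : Measure Ω} {T : Ω → Ω}

lemma mem_refineSeq {P : Finset (Set Ω)} {g : α → Set Ω} (hP : ∀ A, A ∈ P ↔ ∃ a, g a = A)
    (n : ℕ) (A : Set Ω) : A ∈ refineSeq T P n ↔
      ∃ w : ℕ → α, {x | ∀ i ≤ n, T^[i] x ∈ g (w i)} = A := by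
  induction n generalizing A with
  | zero =>
    simp only [refineSeq, hP]
    constructor
    · rintro ⟨a, rfl⟩; exact ⟨fun _ => a, by ext x; simp⟩
    · rintro ⟨w, rfl⟩; exact ⟨w 0, by ext x; simp⟩
  | succ n ih =>
    simp only [refineSeq, Finset.mem_image, Finset.mem_product, Prod.exists]
    constructor
    · rintro ⟨B, C, ⟨hB, ⟨C', hC', rfl⟩⟩, rfl⟩
      obtain ⟨w, rfl⟩ := (ih B).1 hB
      obtain ⟨a, rfl⟩ := (hP C').1 hC'
      refine ⟨fun i => if i ≤ n then w i else a, ?_⟩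
      ext x
      simp only [Set.mem_setOf_eq, Set.mem_inter_iff, Set.mem_preimage]
      constructor
      · intro h
        refine ⟨fun i hi => ?_, ?_⟩
        · have := h i (by omega); rwa [if_pos hi] at this
        · have := h (n + 1) le_rfl; rwa [if_neg (by omega)] at this
      · rintro ⟨h1, h2⟩ i hi
        split_ifs with h
        · exact h1 i h
        · obtain rfl : i = n + 1 := by omega
          exact h2
    · rintro ⟨w, rfl⟩
      refine ⟨_, _, ⟨(ih _).2 ⟨w, rfl⟩, g (w (n + 1)), (hP _).2 ⟨_, rfl⟩, rfl⟩, ?_⟩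
      ext x
      simp only [Set.mem_setOf_eq, Set.mem_inter_iff, Set.mem_preimage]
      constructor
      · rintro ⟨h1, h2⟩ i hi
        rcases Nat.lt_or_ge i (n + 1) with h | h
        · exact h1 i (by omega)
        · obtain rfl : i = n + 1 := by omega
          exact h2
      · intro h
        exact ⟨fun i hi => h i (by omega), h _ le_rfl⟩

lemma partH_eq (hT : MeasurePreserving T μ μ) {P : Finset (Set Ω)} {g : α → Set Ω}
    (hP : ∀ A, A ∈ P ↔ ∃ a, g a = A) {f : Ω → α}
    (hfg : ∀ a, f ⁻¹' {a} =ᵐ[μ] g a) (n : ℕ) :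
    partH μ (refineSeq T P n) = H μ (name T f (n + 1)) := by
  classical
  have hset : refineSeq T P n = Finset.univ.image
      (fun w : Fin (n + 1) → α => {x | ∀ i, T^[i.1] x ∈ g (w i)}) := by
    ext A
    rw [mem_refineSeq hP]
    simp only [Finset.mem_image, Finset.mem_univ, true_and]
    constructor
    · rintro ⟨w, rfl⟩
      refine ⟨fun i => w i, ?_⟩
      ext x; simp only [Set.mem_setOf_eq]
      exact ⟨fun h i hi => h ⟨i, by omega⟩, fun h i => h i (by omega)⟩
    · rintro ⟨w, rfl⟩
      refine ⟨fun i => if h : i < n + 1 then w ⟨i, h⟩ else w 0, ?_⟩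
      ext x; simp only [Set.mem_setOf_eq]
      constructor
      · intro h i
        have := h i (by omega)
        rw [dif_pos i.2] at this; exact this
      · intro h i hi
        rw [dif_pos (by omega)]
        exact h ⟨i, by omega⟩
  have hfgi : ∀ (i : ℕ) (a : α), ∀ᵐ x ∂μ, (f (T^[i] x) = a ↔ T^[i] x ∈ g a) := by
    intro i a
    have h1 : ∀ᵐ x ∂μ, (f x = a ↔ x ∈ g a) := by
      filter_upwards [hfg a] with x hx
      exact iff_of_eq hx
    exact (hT.iterate i).quasiMeasurePreserving.ae h1
  rw [partH, hset, Finset.sum_image_of_pairwise_eq_zero]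
  · unfold H
    refine Finset.sum_congr rfl fun w _ => ?_
    congr 1
    refine measureReal_congr ?_
    have : ∀ᵐ x ∂μ, ∀ i : Fin (n + 1), (f (T^[i.1] x) = w i ↔ T^[i.1] x ∈ g (w i)) :=
      ae_all_iff.2 fun i => hfgi i (w i)
    filter_upwards [this] with x hx
    apply propext
    change (∀ i, _) ↔ (name T f (n + 1) x = w)
    rw [funext_iff]
    exact forall_congr' fun i => (hx i).symm
  · intro w _ w' _ hne heq
    obtain ⟨i, hi⟩ := Function.ne_iff.1 hne
    have : μ {x | ∀ i, T^[i.1] x ∈ g (w i)} = 0 := by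
      refine measure_mono_null (t := {x | T^[i.1] x ∈ g (w i) ∧ T^[i.1] x ∈ g (w' i)}) ?_ ?_
      · intro x hx
        refine ⟨hx i, ?_⟩
        have hx' : x ∈ {x | ∀ i, T^[i.1] x ∈ g (w' i)} := by
          have heq' : {x | ∀ i : Fin (n+1), T^[i.1] x ∈ g (w i)} =
            {x | ∀ i : Fin (n+1), T^[i.1] x ∈ g (w' i)} := heq
          rw [← heq']; exact hx
        exact hx' i
      · rw [measure_eq_zero_iff_ae_notMem]
        filter_upwards [hfgi i (w i), hfgi i (w' i)] with x h1 h2 h3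
        exact hi ((h1.2 h3.1).symm.trans (h2.2 h3.2))
    change negMulLog (μ {x | ∀ i, T^[i.1] x ∈ g (w i)}).toReal = 0
    rw [this]; simp

lemma partEntropy_eq [IsProbabilityMeasure μ] (hT : MeasurePreserving T μ μ)
    {P : Finset (Set Ω)} {g : α → Set Ω}
    (hP : ∀ A, A ∈ P ↔ ∃ a, g a = A) {f : Ω → α} (hf : FM f)
    (hfg : ∀ a, f ⁻¹' {a} =ᵐ[μ] g a) : partEntropy μ T P = hh μ T f := by
  unfold partEntropy
  simp_rw [partH_eq hT hP hfg]
  have hlow : ∀ n : ℕ, hh μ T f ≤ H μ (name T f (n + 1)) / (n + 1) := by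
    intro n
    rw [le_div_iff₀ (by positivity), H_name_eq hT hf]
    have := Finset.sum_le_sum (s := Finset.range (n + 1)) fun i _ =>
      hh_le (μ := μ) hT.measurable hf i
    simp at this
    simp; linarith
  apply le_antisymm
  · refine ge_of_tendsto' ((tendsto_add_atTop_iff_nat 1).2 (tendsto_name hT hf)) fun n => ?_
    have := ciInf_le (f := fun n : ℕ => H μ (name T f (n + 1)) / ((n : ℝ) + 1))
      ⟨hh μ T f, by rintro _ ⟨n, rfl⟩; exact hlow n⟩ n
    simpa using this
  · exact le_ciInf hlow

lemma exists_label [IsProbabilityMeasure μ] (P : FinPart μ) :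
    ∃ (n : ℕ) (g : Fin n → Set Ω) (f : Ω → Fin n), FM f ∧ (∀ A, A ∈ P.sets ↔ ∃ a, g a = A) ∧
      ∀ a, f ⁻¹' {a} =ᵐ[μ] g a := by
  classical
  set e := P.sets.equivFin with he
  set g : Fin P.sets.card → Set Ω := fun i => (e.symm i : Set Ω) with hg
  have hginj : Function.Injective g := fun i j h => e.symm.injective (Subtype.ext h)
  have hgm : ∀ i, g i ∈ P.sets := fun i => (e.symm i).2
  have hcov : ∀ᵐ x ∂μ, ∃ i, x ∈ g i := by
    have := P.cover
    rw [measure_eq_zero_iff_ae_notMem] at this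
    filter_upwards [this] with x hx
    simp only [Set.mem_compl_iff, not_not] at hx
    obtain ⟨A, hA, hxA⟩ := hx
    exact ⟨e ⟨A, hA⟩, by simpa [hg] using hxA⟩
  have hdis : ∀ᵐ x ∂μ, ∀ i j, x ∈ g i → x ∈ g j → i = j := by
    rw [ae_all_iff]; intro i
    rw [ae_all_iff]; intro j
    by_cases hij : i = j
    · exact ae_of_all _ fun _ _ _ => hij
    · have := P.disj (g i) (hgm i) (g j) (hgm j) (fun h => hij (hginj h))
      rw [measure_eq_zero_iff_ae_notMem] at this
      filter_upwards [this] with x hx h1 h2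
      exact absurd ⟨h1, h2⟩ hx
  obtain ⟨x0, i0, _⟩ := hcov.exists
  refine ⟨P.sets.card, g, fun x => if h : ∃ i, x ∈ g i then h.choose else i0, ?_, ?_, ?_⟩
  · have h1 : FM (fun x => fun i => x ∈ g i) := FM.pi (f := fun i x => x ∈ g i)
      fun i => FM.prop (P.meas _ (hgm i))
    exact h1.comp (fun v => if h : ∃ i, v i then h.choose else i0)
  · intro A
    constructor
    · intro hA; exact ⟨e ⟨A, hA⟩, by simp [hg]⟩
    · rintro ⟨a, rfl⟩; exact hgm a
  · intro a
    filter_upwards [hcov, hdis] with x hx hd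
    apply propext
    change (if h : ∃ i, x ∈ g i then h.choose else i0) = a ↔ x ∈ g a
    rw [dif_pos hx]
    constructor
    · rintro rfl; exact hx.choose_spec
    · intro h; exact hd _ _ hx.choose_spec h

lemma ksEntropy_eq [IsProbabilityMeasure μ] (hT : MeasurePreserving T μ μ) :
    ksEntropy μ T = (ent μ T).toReal := by
  classical
  have hnn : ∀ P : FinPart μ, 0 ≤ partEntropy μ T P.sets := by
    intro P
    obtain ⟨n, g, f, hf, hg, hfg⟩ := exists_label P
    rw [partEntropy_eq hT hg hf hfg]
    exact hh_nonneg hT.measurable hf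
  have he : ent μ T = ⨆ P : FinPart μ, ENNReal.ofReal (partEntropy μ T P.sets) := by
    apply le_antisymm
    · refine iSup_le fun n => iSup_le fun f => iSup_le fun hf => ?_
      let P : FinPart μ :=
        { sets := Finset.univ.image fun a => f ⁻¹' {a}
          meas := by
            intro A hA
            simp only [Finset.mem_image, Finset.mem_univ, true_and] at hA
            obtain ⟨a, rfl⟩ := hA
            exact hf a
          cover := by
            have : (⋃₀ ((Finset.univ.image fun a => f ⁻¹' {a} : Finset (Set Ω)) : Set (Set Ω))) = Set.univ := by
              ext x; simp
            rw [this]; simp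
          disj := by
            intro A hA B hB hAB
            simp only [Finset.mem_image, Finset.mem_univ, true_and] at hA hB
            obtain ⟨a, rfl⟩ := hA
            obtain ⟨b, rfl⟩ := hB
            have : f ⁻¹' {a} ∩ f ⁻¹' {b} = ∅ := by
              ext x
              simp only [Set.mem_inter_iff, Set.mem_preimage, Set.mem_singleton_iff,
                Set.mem_empty_iff_false, iff_false, not_and]
              rintro rfl h
              exact hAB (by rw [h])
            rw [this]; simp }
      refine le_iSup_of_le P ?_
      rw [partEntropy_eq hT (P := P.sets) (g := fun a => f ⁻¹' {a}) ?_ hf fun a => ae_eq_refl _]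
      intro A; simp [P]
    · refine iSup_le fun P => ?_
      obtain ⟨n, g, f, hf, hg, hfg⟩ := exists_label P
      rw [partEntropy_eq hT hg hf hfg]
      exact le_ent hT hf
  rw [he, ENNReal.toReal_iSup (by simp)]
  unfold ksEntropy
  congr 1; funext P
  rw [ENNReal.toReal_ofReal (hnn P)]

end Bridge
end Abr

open MeasureTheory Filter
namespace Abr
open Real (negMulLog)
open scoped Topology
set_option linter.unusedSectionVars false
set_option linter.unusedFintypeInType false

section Tower
variable {Y : Type*} [MeasurableSpace Y]

/-- the discrete tower over `Y` with height `k` -/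
def tower (k : Y → ℕ) : Set (Y × ℕ) := {p | p.2 < k p.1}

/-- unnormalised tower measure -/
noncomputable def tM (ν : Measure Y) (k : Y → ℕ) : Measure (Y × ℕ) :=
  (ν.prod Measure.count).restrict (tower k)

/-- tower map -/
def tT (F : Y → Y) (k : Y → ℕ) (p : Y × ℕ) : Y × ℕ :=
  if p.2 + 1 < k p.1 then (p.1, p.2 + 1) else (F p.1, 0)

/-- top of the tower -/
def top (k : Y → ℕ) : Set (Y × ℕ) := {p | ¬ p.2 + 1 < k p.1}

variable {ν : Measure Y} [IsFiniteMeasure ν] {F : Y → Y} {k : Y → ℕ}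

lemma meas_tower (hk : Measurable k) : MeasurableSet (tower k) :=
  measurableSet_lt measurable_snd (hk.comp measurable_fst)

lemma meas_top (hk : Measurable k) : MeasurableSet (top k) :=
  (measurableSet_lt (measurable_snd.add_const 1) (hk.comp measurable_fst)).compl

lemma meas_tT (hF : Measurable F) (hk : Measurable k) : Measurable (tT F k) := by
  unfold tT
  refine Measurable.ite (meas_top hk).of_compl ?_ ?_
  · exact measurable_fst.prodMk (measurable_snd.add_const 1)
  · exact (hF.comp measurable_fst).prodMk measurable_const

lemma lintegral_tM (hk : Measurable k) {g : Y × ℕ → ENNReal} (hg : Measurable g) :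
    ∫⁻ p, g p ∂(tM ν k) = ∫⁻ y, ∑ j ∈ Finset.range (k y), g (y, j) ∂ν := by
  unfold tM
  rw [← lintegral_indicator (meas_tower hk), lintegral_prod _
    (hg.indicator (meas_tower hk)).aemeasurable]
  refine lintegral_congr fun y => ?_
  rw [lintegral_count, tsum_eq_sum (s := Finset.range (k y))]
  · refine Finset.sum_congr rfl fun j hj => ?_
    rw [Set.indicator_of_mem]
    simpa [tower] using hj
  · intro j hj
    rw [Set.indicator_of_notMem]
    simpa [tower] using hj

lemma tM_univ (hk : Measurable k) : tM ν k Set.univ = ∫⁻ y, k y ∂ν := by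
  rw [← lintegral_one, lintegral_tM hk measurable_const]
  simp

lemma tM_compl (hk : Measurable k) : tM ν k (tower k)ᶜ = 0 := by
  unfold tM
  rw [Measure.restrict_apply (meas_tower hk).compl]; simp

lemma tM_apply (hk : Measurable k) {A : Set (Y × ℕ)} (hA : MeasurableSet A) :
    tM ν k A = ∫⁻ y, ∑ j ∈ Finset.range (k y), A.indicator 1 (y, j) ∂ν := by
  rw [← lintegral_tM hk (measurable_one.indicator hA), lintegral_indicator_one hA]

lemma tT_mem (hk1 : ∀ y, 1 ≤ k y) (p : Y × ℕ) : tT F k p ∈ tower k := by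
  unfold tT tower
  split_ifs with h
  · exact h
  · exact hk1 _

lemma mp_tT (hF : MeasurePreserving F ν ν) (hk : Measurable k) (hk1 : ∀ y, 1 ≤ k y) :
    MeasurePreserving (tT F k) (tM ν k) (tM ν k) := by
  refine ⟨meas_tT hF.measurable hk, ?_⟩
  refine Measure.ext_of_lintegral _ fun g hg => ?_
  rw [lintegral_map hg (meas_tT hF.measurable hk),
    lintegral_tM hk (g := fun p => g (tT F k p)) (hg.comp (meas_tT hF.measurable hk)),
    lintegral_tM hk hg]
  have e1 : ∀ y, ∑ j ∈ Finset.range (k y), g (tT F k (y, j)) =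
      ∑ j ∈ Finset.range (k y - 1), g (y, j + 1) + g (F y, 0) := by
    intro y
    obtain ⟨m, hm⟩ : ∃ m, k y = m + 1 := ⟨k y - 1, by have := hk1 y; omega⟩
    rw [hm, Finset.sum_range_succ, Nat.add_sub_cancel]
    congr 1
    · refine Finset.sum_congr rfl fun j hj => ?_
      rw [Finset.mem_range] at hj
      simp [tT, hm, hj]
    · simp [tT, hm]
  have e2 : ∀ y, ∑ j ∈ Finset.range (k y), g (y, j) =
      ∑ j ∈ Finset.range (k y - 1), g (y, j + 1) + g (y, 0) := by
    intro y
    obtain ⟨m, hm⟩ : ∃ m, k y = m + 1 := ⟨k y - 1, by have := hk1 y; omega⟩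
    rw [hm, Finset.sum_range_succ', Nat.add_sub_cancel]
  simp_rw [e1, e2]
  have m0 : Measurable fun y => g (y, 0) := hg.comp (measurable_id.prodMk measurable_const)
  have m1 : Measurable fun y => g (F y, 0) := m0.comp hF.measurable
  rw [lintegral_add_right _ m1, lintegral_add_right _ m0]
  congr 1
  exact hF.lintegral_comp m0

lemma map_top (hk : Measurable k) (hk1 : ∀ y, 1 ≤ k y) :
    ((tM ν k).restrict (top k)).map Prod.fst = ν := by
  ext A hA
  rw [Measure.map_apply measurable_fst hA, Measure.restrict_apply (measurable_fst hA),
    tM_apply hk ((measurable_fst hA).inter (meas_top hk))]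
  have : ∀ y, ∑ j ∈ Finset.range (k y), (Prod.fst ⁻¹' A ∩ top k).indicator
      (1 : Y × ℕ → ENNReal) (y, j) = A.indicator 1 y := by
    intro y
    obtain ⟨m, hm⟩ : ∃ m, k y = m + 1 := ⟨k y - 1, by have := hk1 y; omega⟩
    rw [hm, Finset.sum_range_succ, Finset.sum_eq_zero, zero_add]
    · by_cases hy : y ∈ A <;> simp [Set.indicator, top, hm, hy]
    · intro j hj
      rw [Finset.mem_range] at hj
      rw [Set.indicator_of_notMem]
      rintro ⟨-, h⟩
      exact h (by simp [hm, hj])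
  simp_rw [this]
  exact lintegral_indicator_one hA

lemma tT_top {p : Y × ℕ} (hp : p ∈ top k) : tT F k p = (F p.1, 0) := if_neg hp

lemma tT_not_top {p : Y × ℕ} (hp : p ∉ top k) : tT F k p = (p.1, p.2 + 1) :=
  if_pos (not_not.1 hp)

lemma tT_snd_eq_zero {p : Y × ℕ} : (tT F k p).2 = 0 ↔ p ∈ top k := by
  by_cases hp : p ∈ top k
  · simp [tT_top hp, hp]
  · simp [tT_not_top hp, hp]

lemma tT_iter_lt (z : Y) (d : ℕ) (hd : d < k z) : (tT F k)^[d] (z, 0) = (z, d) := by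
  induction d with
  | zero => rfl
  | succ d ih =>
    rw [Function.iterate_succ_apply', ih (by omega)]
    exact if_pos hd

lemma tT_iter_k (hk1 : ∀ y, 1 ≤ k y) (z : Y) : (tT F k)^[k z] (z, 0) = (F z, 0) := by
  obtain ⟨m, hm⟩ : ∃ m, k z = m + 1 := ⟨k z - 1, by have := hk1 z; omega⟩
  rw [hm, Function.iterate_succ_apply', tT_iter_lt z m (by omega)]
  exact if_neg (by simp [hm])

lemma tT_iter_sum (hk1 : ∀ y, 1 ≤ k y) (z : Y) (r : ℕ) :
    (tT F k)^[∑ s ∈ Finset.range r, k (F^[s] z)] (z, 0) = (F^[r] z, 0) := by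
  induction r with
  | zero => rfl
  | succ r ih =>
    rw [Finset.sum_range_succ, add_comm, Function.iterate_add_apply, ih, tT_iter_k hk1,
      Function.iterate_succ_apply']

lemma traj (hk1 : ∀ y, 1 ≤ k y) {n : ℕ} {z z' : Y}
    (h : ∀ t ≤ n, ((tT F k)^[t] (z, 0)).2 = 0 ↔ ((tT F k)^[t] (z', 0)).2 = 0) (r : ℕ)
    (hr : ∑ s ∈ Finset.range r, k (F^[s] z) ≤ n) :
    ∑ s ∈ Finset.range r, k (F^[s] z) = ∑ s ∈ Finset.range r, k (F^[s] z') := by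
  induction r with
  | zero => rfl
  | succ r ih =>
    rw [Finset.sum_range_succ] at hr ⊢
    have ih := ih (by omega)
    rw [Finset.sum_range_succ, ← ih]
    congr 1
    set S := ∑ s ∈ Finset.range r, k (F^[s] z) with hS
    have a1 : ∀ d, (tT F k)^[d + S] (z, 0) = (tT F k)^[d] (F^[r] z, 0) := fun d => by
      rw [Function.iterate_add_apply, hS, tT_iter_sum hk1]
    have a2 : ∀ d, (tT F k)^[d + S] (z', 0) = (tT F k)^[d] (F^[r] z', 0) := fun d => by
      rw [Function.iterate_add_apply, ih, tT_iter_sum hk1]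
    have p1 := hk1 (F^[r] z)
    have p2 := hk1 (F^[r] z')
    rcases lt_trichotomy (k (F^[r] z)) (k (F^[r] z')) with hlt | heq | hlt
    · have := h (k (F^[r] z) + S) (by omega)
      rw [a1, a2, tT_iter_k hk1, tT_iter_lt _ _ hlt] at this
      simp at this; omega
    · exact heq
    · have := h (k (F^[r] z') + S) (by omega)
      rw [a1, a2, tT_iter_k hk1, tT_iter_lt _ _ hlt] at this
      simp at this; omega

lemma traj2 {n L : ℕ} (hL : n + 2 ≤ L) {z z' : Y}
    (h : ∀ r ≤ n, min (k (F^[r] z)) L = min (k (F^[r] z')) L) (t : ℕ) (ht : t ≤ n) :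
    ∃ r ≤ t, ∃ j ≤ t, (tT F k)^[t] (z, 0) = (F^[r] z, j) ∧ (tT F k)^[t] (z', 0) = (F^[r] z', j) := by
  induction t with
  | zero => exact ⟨0, le_rfl, 0, le_rfl, rfl, rfl⟩
  | succ t ih =>
    obtain ⟨r, hr, j, hj, e1, e2⟩ := ih (by omega)
    have hh := h r (by omega)
    have hiff : j + 1 < k (F^[r] z) ↔ j + 1 < k (F^[r] z') := by omega
    rw [Function.iterate_succ_apply', Function.iterate_succ_apply', e1, e2]
    unfold tT
    simp only
    by_cases hc : j + 1 < k (F^[r] z)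
    · rw [if_pos hc, if_pos (hiff.1 hc)]
      exact ⟨r, by omega, j + 1, by omega, rfl, rfl⟩
    · rw [if_neg hc, if_neg (fun h => hc (hiff.2 h))]
      exact ⟨r + 1, by omega, 0, by omega, by rw [Function.iterate_succ_apply'],
        by rw [Function.iterate_succ_apply']⟩

end Tower
end Abr

open MeasureTheory Filter
namespace Abr
open Real (negMulLog)
open scoped Topology
set_option linter.unusedSectionVars false
set_option linter.unusedFintypeInType false

section TowerEnt
variable {Y : Type*} [MeasurableSpace Y]
variable {ν : Measure Y} [IsFiniteMeasure ν] {F : Y → Y} {k : Y → ℕ}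

lemma finite_tM (hk : Measurable k) (hki : ∫⁻ y, k y ∂ν ≠ ⊤) : IsFiniteMeasure (tM ν k) :=
  ⟨by rw [tM_univ hk]; exact hki.lt_top⟩

lemma FM_nat {Ω : Type*} [MeasurableSpace Ω] {α : Type} {f : Ω → ℕ} (hf : Measurable f)
    (φ : ℕ → α) : FM (fun x => φ (f x)) := by
  intro a
  exact hf (MeasurableSet.of_discrete (s := φ ⁻¹' {a}))

lemma tendsto_gt {Ω : Type*} [MeasurableSpace Ω] {μ : Measure Ω} [IsFiniteMeasure μ] {f : Ω → ℕ}
    (hf : Measurable f) : Tendsto (fun n : ℕ => μ.real {x | n < f x}) atTop (𝓝 0) := by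
  have h := tendsto_measure_iInter_atTop (μ := μ) (s := fun n : ℕ => {x | n < f x})
    (fun n => (measurableSet_lt measurable_const hf).nullMeasurableSet)
    (fun a b hab x hx => lt_of_le_of_lt hab hx) ⟨0, measure_ne_top _ _⟩
  have e : (⋂ n : ℕ, {x | n < f x}) = ∅ := by
    ext x
    simp only [Set.mem_iInter, Set.mem_ofPred_eq, Set.mem_empty_iff_false, iff_false]
    exact fun h => lt_irrefl _ (h (f x))
  rw [e, measure_empty] at h
  have := (ENNReal.tendsto_toReal ENNReal.zero_ne_top).comp h
  simp only [ENNReal.toReal_zero] at this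
  exact this

open Classical in
/-- block labelling on the base -/
noncomputable def blk {a : ℕ} (k : Y → ℕ) (q : Y × ℕ → Fin a) (N : ℕ) (y : Y) :
    Option (Fin (N + 1) × (Fin N → Fin a)) :=
  if y ∈ {y | k y ≤ N} then some (Fin.ofNat (N + 1) (k y), fun j => q (y, j)) else none

lemma FM_blk {a : ℕ} (hk : Measurable k) {q : Y × ℕ → Fin a} (hq : FM q) (N : ℕ) :
    FM (blk k q N) := by
  unfold blk
  have key : FM (fun y => some (Fin.ofNat (N + 1) (k y), fun j : Fin N => q (y, j))) := ?_
  · have := FM.ite key (FM.const none) (E := {y | k y ≤ N}) (measurableSet_le hk measurable_const)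
    convert this
  refine FM.comp (f := fun y => (Fin.ofNat (N + 1) (k y), fun j : Fin N => q (y, j))) ?_ some
  refine FM.pair (FM_nat hk _) ?_
  refine FM.pi (f := fun (j : Fin N) y => q (y, j)) fun j => ?_
  exact hq.comp_meas (measurable_id.prodMk measurable_const)

lemma blk_eq {a : ℕ} {q : Y × ℕ → Fin a} {N : ℕ} {y y' : Y} (h : blk k q N y = blk k q N y') :
    (k y ≤ N ↔ k y' ≤ N) ∧ (k y ≤ N → k y = k y' ∧ ∀ j < N, q (y, j) = q (y', j)) := by
  unfold blk at h
  simp only [Set.mem_ofPred_eq] at h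
  by_cases h1 : k y ≤ N <;> by_cases h2 : k y' ≤ N
  · simp only [h1, h2, if_true, Option.some.injEq, Prod.mk.injEq] at h
    refine ⟨by simp [h1, h2], fun _ => ⟨?_, fun j hj => congrFun h.2 ⟨j, hj⟩⟩⟩
    have := congrArg Fin.val h.1
    simp only [Fin.ofNat_eq_cast, Fin.val_natCast] at this
    rwa [Nat.mod_eq_of_lt (by omega), Nat.mod_eq_of_lt (by omega)] at this
  · simp [h1, h2] at h
  · simp [h1, h2] at h
  · simp [h1, h2]

/-- visible level -/
def lev (k : Y → ℕ) (N : ℕ) (p : Y × ℕ) : Fin (N + 2) :=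
  Fin.ofNat (N + 2) (if k p.1 ≤ N then min p.2 N else min p.2 1)

lemma FM_lev (hk : Measurable k) (N : ℕ) : FM (lev k N) := by
  refine FM_nat (Measurable.ite ?_ ?_ ?_) _
  · exact measurableSet_le (hk.comp measurable_fst) measurable_const
  · exact measurable_snd.min measurable_const
  · exact measurable_snd.min measurable_const

lemma lev_eq {N : ℕ} {p p' : Y × ℕ} (h : lev k N p = lev k N p') :
    (if k p.1 ≤ N then min p.2 N else min p.2 1) =
      (if k p'.1 ≤ N then min p'.2 N else min p'.2 1) := by
  have := congrArg Fin.val h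
  unfold lev at this
  simp only [Fin.ofNat_eq_cast, Fin.val_natCast] at this
  rwa [Nat.mod_eq_of_lt (by split_ifs <;> omega), Nat.mod_eq_of_lt (by split_ifs <;> omega)] at this

lemma lev_zero (hk1 : ∀ y, 1 ≤ k y) {N : ℕ} {p : Y × ℕ} : lev k N p = 0 ↔ p.2 = 0 := by
  have h1 := hk1 p.1
  constructor
  · intro h
    have := congrArg Fin.val h
    unfold lev at this
    simp only [Fin.ofNat_eq_cast, Fin.val_natCast, Fin.val_zero] at this
    rw [Nat.mod_eq_of_lt (by split_ifs <;> omega)] at this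
    split_ifs at this <;> omega
  · intro h
    simp [lev, h]

lemma tower_upper_aux (hF : MeasurePreserving F ν ν) (hk : Measurable k) (hk1 : ∀ y, 1 ≤ k y)
    (hki : ∫⁻ y, k y ∂ν ≠ ⊤) {a : ℕ} {q : Y × ℕ → Fin a} (hq : FM q) (N : ℕ) {ε : ℝ}
    (hε : 0 < ε) :
    hh (tM ν k) (tT F k) (fun p => (blk k q N p.1, lev k N p)) ≤ hh ν F (blk k q N) + ε +
      (H (tM ν k) (ind {p | N < k p.1} (fun p : Y × ℕ => decide (p.2 = 0)))
        - negMulLog ((tM ν k).real Set.univ)) := by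
  have := finite_tM (ν := ν) hk hki
  set μ := tM ν k with hμ
  set T := tT F k with hT
  have hTm : Measurable T := meas_tT hF.measurable hk
  set P := blk k q N with hP
  have hPm : FM P := FM_blk hk hq N
  have hP1 : FM (fun p : Y × ℕ => P p.1) := hPm.comp_meas measurable_fst
  have hl := FM_lev (Y := Y) hk N
  set Q := fun p : Y × ℕ => (P p.1, lev k N p) with hQ
  have hQm : FM Q := hP1.pair hl
  have hE : MeasurableSet {p : Y × ℕ | N < k p.1} :=
    measurableSet_lt measurable_const (hk.comp measurable_fst)
  have hb : FM (fun p : Y × ℕ => decide (p.2 = 0)) :=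
    FM_nat measurable_snd (fun j => decide (j = 0))
  -- choose `i`
  obtain ⟨i, hi⟩ : ∃ i, Hc ν P (fun x => name F P i (F x)) ≤ hh ν F P + ε / 2 := by
    have := (tendsto_d (μ := ν) hF.measurable hPm).eventually_le_const
      (u := hh ν F P + ε / 2) (by linarith)
    exact this.exists
  set v := fun y => name F P i (F y) with hv
  have hvm : FM v := (hPm.name hF.measurable i).comp_meas hF.measurable
  have hv1 : FM (fun p : Y × ℕ => v p.1) := hvm.comp_meas measurable_fst
  set R : Y × ℕ → ℕ := fun p => ∑ s ∈ Finset.range i, k (F^[s] (F p.1)) with hR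
  have hRm : Measurable R := by
    refine Finset.measurable_sum _ fun s _ => ?_
    exact hk.comp ((hF.measurable.iterate s).comp (hF.measurable.comp measurable_fst))
  set μG := μ.restrict (top k) with hμG
  obtain ⟨n, hn⟩ : ∃ n : ℕ, H μG (ind {p | n < R p} (fun p : Y × ℕ => v p.1))
      - negMulLog (μG.real Set.univ) ≤ ε / 2 := by
    have := (tendsto_ind (μ := μG) (E := fun n => {p | n < R p}) (f := fun p : Y × ℕ => v p.1)
      (fun n => measurableSet_lt measurable_const hRm) (tendsto_gt hRm)).eventually_le_const
      (u := ε / 2) (by linarith)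
    exact this.exists
  set W := fun p => name T Q (n + 1) (T p) with hW
  have hWm : FM W := (hQm.name hTm (n + 1)).comp_meas hTm
  have s1 : hh μ T Q ≤ Hc μ Q W := hh_le hTm hQm (n + 1)
  have s2 : Hc μ Q W = Hc μ (lev k N) (fun p => (P p.1, W p)) + Hc μ (fun p => P p.1) W := by
    rw [← Hc_chain]
    unfold Hc
    congr 1
    refine H_congr_det (s := Set.univ) (by simp) ?_ ?_
    · intro x _ y _ h; simp_all
    · intro x _ y _ h; simp_all
  have hW0 : ∀ {p p'}, W p = W p' → ∀ t ≤ n, Q (T^[t] (T p)) = Q (T^[t] (T p')) :=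
    fun h t ht => name_eq_iff.1 h t (by omega)
  have s3 : Hc μ (lev k N) (fun p => (P p.1, W p)) ≤
      H μ (ind {p | N < k p.1} (fun p : Y × ℕ => decide (p.2 = 0)))
        - negMulLog (μ.real Set.univ) := by
    refine (Hc_mono (s := tower k) (tM_compl hk) hl (hb.ind hE) (hP1.pair hWm) ?_).trans
      (Hc_le_H (hb.ind hE) (hP1.pair hWm))
    intro p hp p' hp' h
    simp only [Prod.mk.injEq] at h
    obtain ⟨h1, h2, h3⟩ := h
    have hpb := blk_eq h2
    have hQ0 := hW0 h3 0 (Nat.zero_le _)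
    simp only [Function.iterate_zero, id_eq, hQ, Prod.mk.injEq] at hQ0
    unfold lev
    congr 1
    by_cases hpN : k p.1 ≤ N
    · have hpN' := hpb.1.1 hpN
      rw [if_pos hpN, if_pos hpN']
      have hkk := (hpb.2 hpN).1
      have hz : p ∈ top k ↔ p' ∈ top k := by
        rw [← tT_snd_eq_zero (F := F), ← lev_zero hk1 (N := N), ← tT_snd_eq_zero (F := F),
          ← lev_zero hk1 (N := N), hQ0.2]
      change p.2 < k p.1 at hp
      change p'.2 < k p'.1 at hp'
      by_cases ht : p ∈ top k
      · have ht' := hz.1 ht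
        change ¬ _ at ht
        change ¬ _ at ht'
        omega
      · have ht' : p' ∉ top k := fun h => ht (hz.2 h)
        have e := lev_eq hQ0.2
        rw [hT, tT_not_top ht, tT_not_top ht'] at e
        simp only [if_pos hpN, if_pos hpN'] at e
        change ¬ ¬ _ at ht
        change ¬ ¬ _ at ht'
        omega
    · have hpN' : ¬ k p'.1 ≤ N := fun h => hpN (hpb.1.2 h)
      rw [if_neg hpN, if_neg hpN']
      rw [ind_of_mem (by simpa using hpN), ind_of_mem (by simpa using hpN')] at h1
      have h1 := Option.some.inj h1
      simp only [decide_eq_decide] at h1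
      omega
  have hGW : W ⁻¹' {w | (w 0).2 = 0} = top k := by
    ext p
    change lev k N (T p) = 0 ↔ _
    rw [lev_zero hk1, hT, tT_snd_eq_zero]
  have s4 := Hc_restrict (μ := μ) hP1 hWm {w | (w 0).2 = 0}
  rw [hGW] at s4
  have s5 : Hc (μ.restrict (top k)ᶜ) (fun p => P p.1) W = 0 := by
    refine Hc_of_det (s := (top k)ᶜ) ?_ ?_
    · rw [Measure.restrict_apply (meas_top hk).compl.compl]; simp
    · intro p hp p' hp' h
      have hQ0 := hW0 h 0 (Nat.zero_le _)
      simp only [Function.iterate_zero, id_eq, hQ, Prod.mk.injEq] at hQ0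
      rw [hT, tT_not_top hp, tT_not_top hp'] at hQ0
      exact hQ0.1
  have s6 : Hc μG (fun p => P p.1) W ≤ Hc μG (fun p => P p.1) (fun p => v p.1)
      + Hc μG (fun p => v p.1) W := Hc_triangle hP1 hv1 hWm
  have s7 : Hc μG (fun p => P p.1) (fun p => v p.1) = Hc ν P v := by
    rw [← Hc_map μG measurable_fst hPm hvm, map_top hk hk1]
  have s8 : Hc μG (fun p => v p.1) W ≤ H μG (ind {p | n < R p} (fun p : Y × ℕ => v p.1))
      - negMulLog (μG.real Set.univ) := by
    refine Hc_le_ind (s := top k) ?_ (measurableSet_lt measurable_const hRm) hv1 hWm ?_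
    · rw [Measure.restrict_apply (meas_top hk).compl]; simp
    · rintro p ⟨hp, hpR⟩ p' ⟨hp', hpR'⟩ h
      have hpR : R p ≤ n := not_lt.1 hpR
      rw [hv]
      simp only
      rw [name_eq_iff]
      intro r hr
      have hw := hW0 h
      rw [hT, tT_top hp, tT_top hp'] at hw
      have hSr : ∑ s ∈ Finset.range r, k (F^[s] (F p.1)) ≤ n := by
        refine le_trans ?_ hpR
        exact Finset.sum_le_sum_of_subset (Finset.range_mono hr.le)
      have htr := traj hk1 (F := F) (k := k) (n := n) (z := F p.1) (z' := F p'.1) (fun t ht => by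
        have := congrArg Prod.snd (hw t ht)
        simp only [hQ] at this
        rw [← lev_zero hk1 (N := N), ← lev_zero hk1 (N := N), this]) r hSr
      have := hw _ hSr
      rw [tT_iter_sum hk1, htr, tT_iter_sum hk1] at this
      exact congrArg Prod.fst this
  linarith

lemma tower_upper (hF : MeasurePreserving F ν ν) (hk : Measurable k) (hk1 : ∀ y, 1 ≤ k y)
    (hki : ∫⁻ y, k y ∂ν ≠ ⊤) : ent (tM ν k) (tT F k) ≤ ent ν F := by
  have := finite_tM (ν := ν) hk hki
  refine ent_le fun a q hq ε hε => ?_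
  have hE : ∀ N : ℕ, MeasurableSet {p : Y × ℕ | N < k p.1} := fun N =>
    measurableSet_lt measurable_const (hk.comp measurable_fst)
  have hEt := tendsto_gt (μ := tM ν k) (f := fun p => k p.1) (hk.comp measurable_fst)
  obtain ⟨N, h1, h2⟩ := (((tendsto_ind hE (f := q) hEt).eventually_le_const
    (u := ε / 3) (by linarith)).and ((tendsto_ind hE
      (f := fun p : Y × ℕ => decide (p.2 = 0)) hEt).eventually_le_const
    (u := ε / 3) (by linarith))).exists
  have h3 := tower_upper_aux hF hk hk1 hki hq N (ε := ε / 3) (by linarith)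
  have hP1 : FM (fun p : Y × ℕ => blk k q N p.1) := (FM_blk hk hq N).comp_meas measurable_fst
  have hQ := hP1.pair (FM_lev (Y := Y) hk N)
  have h4 := hh_le_add (mp_tT hF hk hk1) hq hQ
  have h5 := Hc_le_ind (μ := tM ν k) (s := tower k) (tM_compl hk) (hE N) hq hQ (by
    rintro p ⟨hp, hpE⟩ p' ⟨hp', hpE'⟩ h
    simp only [Prod.mk.injEq] at h
    have hpN : k p.1 ≤ N := not_lt.1 hpE
    have hpN' : k p'.1 ≤ N := not_lt.1 hpE'
    have e := lev_eq h.2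
    have hb := (blk_eq h.1).2 hpN
    change p.2 < k p.1 at hp
    change p'.2 < k p'.1 at hp'
    simp only [if_pos hpN, if_pos hpN'] at e
    have e2 : p.2 = p'.2 := by omega
    have := hb.2 p.2 (by omega)
    rw [show p' = (p'.1, p.2) from Prod.ext rfl e2.symm]
    exact this)
  have h6 : hh (tM ν k) (tT F k) q ≤ hh ν F (blk k q N) + ε := by linarith
  refine (ENNReal.ofReal_le_ofReal h6).trans ?_
  refine ENNReal.ofReal_add_le.trans ?_
  gcongr
  exact le_ent hF (FM_blk hk hq N)

end TowerEnt
end Abr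

open MeasureTheory Filter
namespace Abr
open Real (negMulLog)
open scoped Topology
set_option linter.unusedSectionVars false
set_option linter.unusedFintypeInType false

section TowerLow
variable {Y : Type*} [MeasurableSpace Y]
variable {ν : Measure Y} [IsFiniteMeasure ν] {F : Y → Y} {k : Y → ℕ}

/-- truncated height -/
def kap (k : Y → ℕ) (L : ℕ) (y : Y) : Fin (L + 1) := Fin.ofNat (L + 1) (min (k y) L)

lemma kap_val (L : ℕ) (y : Y) : (kap k L y).val = min (k y) L := by
  unfold kap
  simp only [Fin.ofNat_eq_cast, Fin.val_natCast]
  exact Nat.mod_eq_of_lt (by omega)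

lemma kap_eq {L : ℕ} {y y' : Y} : kap k L y = kap k L y' ↔ min (k y) L = min (k y') L := by
  rw [Fin.ext_iff, kap_val, kap_val]

lemma FM_kap (hk : Measurable k) (L : ℕ) : FM (kap k L) :=
  FM_nat hk (fun j => Fin.ofNat (L + 1) (min j L))

lemma Hc_kap (hk : Measurable k) {N L : ℕ} (h : N ≤ L) :
    Hc ν (kap k L) (kap k N) = H ν (kap k L) - H ν (kap k N) := by
  have e : Hc ν (kap k N) (kap k L) = 0 := by
    refine Hc_of_det (s := Set.univ) (by simp) ?_
    intro x _ y _ h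
    rw [kap_eq] at h ⊢
    omega
  unfold Hc at e ⊢
  rw [H_comm]
  linarith

lemma negMulLog_le' {x : ℝ} (hx : 0 ≤ x) (c : ℝ) : negMulLog x ≤ c * x + Real.exp (-c) := by
  rcases hx.eq_or_lt with rfl | hx
  · simp [Real.exp_nonneg]
  · have h := Real.log_le_sub_one_of_pos (x := Real.exp (-c) / x) (by positivity)
    rw [Real.log_div (Real.exp_ne_zero _) hx.ne', Real.log_exp] at h
    have h2 : x * (-c - Real.log x) ≤ x * (Real.exp (-c) / x - 1) :=
      mul_le_mul_of_nonneg_left h hx.le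
    rw [mul_sub, mul_sub, mul_div_cancel₀ _ hx.ne'] at h2
    unfold Real.negMulLog
    nlinarith

lemma H_kap_le (hk : Measurable k) (hki : ∫⁻ y, k y ∂ν ≠ ⊤) (L : ℕ) :
    H ν (kap k L) ≤ (∫⁻ y, k y ∂ν).toReal + (1 - Real.exp (-1))⁻¹ := by
  unfold H
  have h1 : ∀ i : Fin (L + 1), negMulLog (ν.real (kap k L ⁻¹' {i})) ≤
      (i : ℝ) * ν.real (kap k L ⁻¹' {i}) + Real.exp (-1) ^ (i : ℕ) := by
    intro i
    refine (negMulLog_le' measureReal_nonneg (i : ℝ)).trans (le_of_eq ?_)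
    rw [← Real.exp_nat_mul]; ring_nf
  refine (Finset.sum_le_sum fun i _ => h1 i).trans ?_
  rw [Finset.sum_add_distrib]
  refine add_le_add ?_ ?_
  · have h2 : ∑ i : Fin (L + 1), (i : ENNReal) * ν (kap k L ⁻¹' {i}) ≤ ∫⁻ y, k y ∂ν := by
      calc ∑ i : Fin (L + 1), (i : ENNReal) * ν (kap k L ⁻¹' {i})
          = ∑ i : Fin (L + 1), ∫⁻ y, (kap k L ⁻¹' {i}).indicator (fun _ => (i : ENNReal)) y ∂ν := by
            refine Finset.sum_congr rfl fun i _ => ?_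
            rw [lintegral_indicator_const (FM_kap hk L i)]
        _ = ∫⁻ y, ∑ i : Fin (L + 1), (kap k L ⁻¹' {i}).indicator (fun _ => (i : ENNReal)) y ∂ν := by
            rw [lintegral_finsetSum]
            intro i _
            exact measurable_const.indicator (FM_kap hk L i)
        _ ≤ ∫⁻ y, k y ∂ν := by
            refine lintegral_mono fun y => ?_
            simp only [Set.indicator, Set.mem_preimage, Set.mem_singleton_iff]
            rw [Finset.sum_ite_eq Finset.univ (kap k L y)]
            simp only [Finset.mem_univ, if_true, kap_val]
            exact_mod_cast min_le_left _ _
    have h3 := ENNReal.toReal_mono hki h2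
    rw [ENNReal.toReal_sum (fun i _ => ENNReal.mul_ne_top (by simp) (measure_ne_top _ _))] at h3
    simpa [Measure.real] using h3
  · rw [Fin.sum_univ_eq_sum_range (fun i => Real.exp (-1) ^ i)]
    have hlt : Real.exp (-1) < 1 := by rw [Real.exp_lt_one_iff]; norm_num
    rw [← tsum_geometric_of_lt_one (Real.exp_nonneg _) hlt]
    exact (summable_geometric_of_lt_one (Real.exp_nonneg _) hlt).sum_le_tsum _
      (fun i _ => by positivity)

lemma exists_N (hk : Measurable k) (hki : ∫⁻ y, k y ∂ν ≠ ⊤) {ε : ℝ} (hε : 0 < ε) :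
    ∃ N, ∀ L ≥ N, Hc ν (kap k L) (kap k N) ≤ ε := by
  have hm : Monotone fun L => H ν (kap k L) := by
    intro N L h
    have := Hc_nonneg (μ := ν) (FM_kap hk L) (FM_kap hk N)
    rw [Hc_kap hk h] at this
    simp only; linarith
  have hb : BddAbove (Set.range fun L => H ν (kap k L)) :=
    ⟨_, by rintro _ ⟨L, rfl⟩; exact H_kap_le hk hki L⟩
  obtain ⟨N, hN⟩ := ((tendsto_atTop_ciSup hm hb).eventually_const_lt
    (u := (⨆ L, H ν (kap k L)) - ε) (by linarith)).exists
  refine ⟨N, fun L hL => ?_⟩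
  rw [Hc_kap hk hL]
  have := le_ciSup hb L
  linarith

lemma tower_lower_aux (hF : MeasurePreserving F ν ν) (hk : Measurable k) (hk1 : ∀ y, 1 ≤ k y)
    (hki : ∫⁻ y, k y ∂ν ≠ ⊤) {a : ℕ} {p : Y → Fin a} (hp : FM p) {N : ℕ} {ε : ℝ}
    (hN : ∀ L ≥ N, Hc ν (kap k L) (kap k N) ≤ ε) :
    hh ν F p ≤ hh (tM ν k) (tT F k) (fun x => ((p x.1, kap k N x.1), decide (x.2 = 0))) + ε := by
  have := finite_tM (ν := ν) hk hki
  set μ := tM ν k with hμ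
  set T := tT F k with hT
  have hTm : Measurable T := meas_tT hF.measurable hk
  set P := fun y => (p y, kap k N y) with hP
  have hPm : FM P := hp.pair (FM_kap hk N)
  have hP1 : FM (fun x : Y × ℕ => P x.1) := hPm.comp_meas measurable_fst
  have hb : FM (fun p : Y × ℕ => decide (p.2 = 0)) :=
    FM_nat measurable_snd (fun j => decide (j = 0))
  set Q := fun x : Y × ℕ => (P x.1, decide (x.2 = 0)) with hQ
  have hQm : FM Q := hP1.pair hb
  rw [← sub_le_iff_le_add]
  refine le_ciInf fun n => ?_
  refine le_trans ?_ (d_anti hTm hQm (Nat.le_succ n))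
  simp only
  set W := fun x => name T Q (n + 1) (T x) with hW
  have hWm : FM W := (hQm.name hTm (n + 1)).comp_meas hTm
  have hGW : W ⁻¹' {w | (w 0).2 = true} = top k := by
    ext x
    change decide ((T x).2 = 0) = true ↔ _
    rw [decide_eq_true_iff, hT, tT_snd_eq_zero]
  have s4 := Hc_restrict (μ := μ) hQm hWm {w | (w 0).2 = true}
  rw [hGW] at s4
  set μG := μ.restrict (top k) with hμG
  have s5 : 0 ≤ Hc (μ.restrict (top k)ᶜ) Q W := Hc_nonneg hQm hWm
  have s6 : Hc μG (fun x => P x.1) W ≤ Hc μG Q W :=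
    Hc_mono (s := Set.univ) (by simp) hP1 hQm hWm (by
      intro x _ y _ h
      simp only [Prod.mk.injEq, hQ] at h
      exact h.1.1)
  obtain ⟨L, hL1, hL2⟩ : ∃ L, N ≤ L ∧ n + 2 ≤ L := ⟨max N (n + 2), by omega, by omega⟩
  set PL := fun y => (P y, kap k L y) with hPL
  have hPLm : FM PL := hPm.pair (FM_kap hk L)
  set V := fun y => name F PL (n + 1) (F y) with hV
  have hVm : FM V := (hPLm.name hF.measurable _).comp_meas hF.measurable
  have hV1 : FM (fun x : Y × ℕ => V x.1) := hVm.comp_meas measurable_fst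
  have s7 : Hc μG (fun x => P x.1) (fun x => V x.1) ≤ Hc μG (fun x => P x.1) W := by
    refine Hc_anti (s := top k) ?_ hP1 hV1 ?_
    · rw [Measure.restrict_apply (meas_top hk).compl]; simp
    · intro x hx y hy h
      simp only [hV] at h
      rw [name_eq_iff] at h
      simp only [hW]
      rw [name_eq_iff]
      intro t ht
      obtain ⟨r, hr, j, hj, e1, e2⟩ := traj2 (F := F) (k := k) hL2 (z := F x.1) (z' := F y.1)
        (fun r hr => by
          have := congrArg Prod.snd (h r (by omega))
          exact kap_eq.1 this) t (by omega)
      rw [hT, tT_top hx, tT_top hy, e1, e2]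
      have := congrArg Prod.fst (h r (by omega))
      simp only [hQ]
      simp only [hPL] at this
      rw [this]
  have s8 : Hc μG (fun p => P p.1) (fun p => V p.1) = Hc ν P V := by
    rw [← Hc_map μG measurable_fst hPm hVm, map_top hk hk1]
  have s9 : Hc ν (kap k L) (fun y => (P y, V y)) ≤ ε := by
    refine le_trans (Hc_anti (s := Set.univ) (by simp) (FM_kap hk L) (hPm.pair hVm) ?_) (hN L hL1)
    intro x _ y _ h
    simp only [Prod.mk.injEq, hP] at h
    exact h.1.2
  have s10 : Hc ν PL V = Hc ν (kap k L) (fun y => (P y, V y)) + Hc ν P V := by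
    rw [← Hc_chain]
    unfold Hc
    congr 1
    refine H_congr_det (s := Set.univ) (by simp) ?_ ?_
    · intro x _ y _ h; simp_all
    · intro x _ y _ h; simp_all
  have s11 : hh ν F PL ≤ Hc ν PL V := hh_le hF.measurable hPLm (n + 1)
  have s12 : hh ν F p ≤ hh ν F PL := hh_mono hF (s := Set.univ) (by simp) hp hPLm (by
    intro x _ y _ h; simp only [hPL, hP, Prod.mk.injEq] at h; exact h.1.1)
  linarith

lemma tower_lower (hF : MeasurePreserving F ν ν) (hk : Measurable k) (hk1 : ∀ y, 1 ≤ k y)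
    (hki : ∫⁻ y, k y ∂ν ≠ ⊤) : ent ν F ≤ ent (tM ν k) (tT F k) := by
  have := finite_tM (ν := ν) hk hki
  refine ent_le fun a p hp ε hε => ?_
  obtain ⟨N, hN⟩ := exists_N (ν := ν) hk hki hε
  refine (ENNReal.ofReal_le_ofReal (tower_lower_aux hF hk hk1 hki hp hN)).trans ?_
  refine ENNReal.ofReal_add_le.trans ?_
  gcongr
  refine le_ent (mp_tT hF hk hk1) ?_
  exact ((hp.comp_meas measurable_fst).pair ((FM_kap hk N).comp_meas measurable_fst)).pair
    (FM_nat measurable_snd (fun j => decide (j = 0)))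

lemma ent_tower (hF : MeasurePreserving F ν ν) (hk : Measurable k) (hk1 : ∀ y, 1 ≤ k y)
    (hki : ∫⁻ y, k y ∂ν ≠ ⊤) : ent (tM ν k) (tT F k) = ent ν F :=
  le_antisymm (tower_upper hF hk hk1 hki) (tower_lower hF hk hk1 hki)

end TowerLow
end Abr

open MeasureTheory Filter
namespace Abr
open Real (negMulLog)
open scoped Topology
set_option linter.unusedSectionVars false
set_option linter.unusedFintypeInType false

section Approx
variable {Ω : Type*} [MeasurableSpace Ω] {μ : Measure Ω} [IsFiniteMeasure μ]
variable {I : Type*} {γ : I → Type} [∀ i, Fintype (γ i)] {g : ∀ i, Ω → γ i}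

lemma approx_finset (hg : ∀ i, FM (g i)) {s : Set Ω} (hs : μ sᶜ = 0)
    (hdir : ∀ i j, ∃ l, Det s (g i) (g l) ∧ Det s (g j) (g l)) [Nonempty I]
    {A : ℕ → Set Ω} (hA : ∀ n, MeasurableSet (A n))
    (hap : ∀ n, ∀ ε > 0, ∃ i, Hc μ (fun x => x ∈ A n) (g i) ≤ ε) (n : ℕ) :
    ∀ ε > 0, ∃ i, Hc μ (fun x => fun j : Fin n => x ∈ A j) (g i) ≤ ε := by
  induction n with
  | zero =>
    intro ε hε
    refine ⟨Classical.arbitrary I, ?_⟩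
    rw [Hc_of_det (s := Set.univ) (by simp)]
    · exact hε.le
    · intro x _ y _ _; exact Subsingleton.elim _ _
  | succ n ih =>
    intro ε hε
    obtain ⟨i, hi⟩ := ih (ε / 2) (by linarith)
    obtain ⟨j, hj⟩ := hap n (ε / 2) (by linarith)
    obtain ⟨l, h1, h2⟩ := hdir i j
    refine ⟨l, ?_⟩
    have f1 : FM (fun x => fun j : Fin n => x ∈ A j) :=
      FM.pi (f := fun (j : Fin n) x => x ∈ A j) fun j => FM.prop (hA j)
    have f2 : FM (fun x => fun j : Fin (n + 1) => x ∈ A j) :=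
      FM.pi (f := fun (j : Fin (n + 1)) x => x ∈ A j) fun j => FM.prop (hA j)
    have f3 : FM (fun x => x ∈ A n) := FM.prop (hA n)
    have s1 := Hc_anti hs f1 (hg l) h1
    have s2 := Hc_anti hs f3 (hg l) h2
    have s3 := Hc_pair_le (μ := μ) (g := g l) f1 f3
    have s4 := Hc_mono (μ := μ) (s := Set.univ) (by simp) f2 (f1.pair f3) (hg l) (by
      intro x _ y _ h
      simp only [Prod.mk.injEq] at h
      funext j
      rcases Fin.lastCases (motive := fun j => j = Fin.last n ∨ ∃ j' : Fin n, j = j'.castSucc)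
        (Or.inl rfl) (fun j' => Or.inr ⟨j', rfl⟩) j with rfl | ⟨j', rfl⟩
      · exact h.1.2
      · exact congrFun h.1.1 j')
    linarith

lemma approx_sigma (hg : ∀ i, FM (g i)) {s : Set Ω} (hs : μ sᶜ = 0)
    (hdir : ∀ i j, ∃ l, Det s (g i) (g l) ∧ Det s (g j) (g l)) [Nonempty I] (App : Set Ω → Prop)
    (hApp : App = fun A => (MeasurableSet A ∧ ∀ ε > 0, ∃ i, Hc μ (fun x => x ∈ A) (g i) ≤ ε)) :
    ∃ m : MeasurableSpace Ω, ∀ A, MeasurableSet[m] A ↔ App A := by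
  subst hApp
  refine ⟨{ MeasurableSet' := fun A => MeasurableSet A ∧ ∀ ε > 0, ∃ i,
              Hc μ (fun x => x ∈ A) (g i) ≤ ε
            measurableSet_empty := ?_
            measurableSet_compl := ?_
            measurableSet_iUnion := ?_ }, fun A => Iff.rfl⟩
  · refine ⟨MeasurableSet.empty, fun ε hε => ⟨Classical.arbitrary I, ?_⟩⟩
    rw [Hc_of_det (s := Set.univ) (by simp)]
    · exact hε.le
    · intro x _ y _ _; rfl
  · rintro A ⟨hA, hap⟩
    refine ⟨hA.compl, fun ε hε => ?_⟩
    obtain ⟨i, hi⟩ := hap ε hε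
    refine ⟨i, le_trans (Hc_mono (s := Set.univ) (by simp) (FM.prop hA.compl) (FM.prop hA) (hg i) ?_) hi⟩
    intro x _ y _ h
    simp only [Prod.mk.injEq] at h
    simp only [Set.mem_compl_iff, h.1]
  · intro A hA
    have hAm := fun n => (hA n).1
    have hU : MeasurableSet (⋃ n, A n) := MeasurableSet.iUnion hAm
    refine ⟨hU, fun ε hε => ?_⟩
    have hE : ∀ n, MeasurableSet ((⋃ n, A n) \ ⋃ j < n, A j) := fun n =>
      hU.diff (MeasurableSet.biUnion (Set.to_countable _) fun j _ => hAm j)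
    have hE0 : Tendsto (fun n => μ.real ((⋃ n, A n) \ ⋃ j < n, A j)) atTop (𝓝 0) := by
      have h := tendsto_measure_iInter_atTop (μ := μ) (s := fun n : ℕ => (⋃ n, A n) \ ⋃ j < n, A j)
        (fun n => (hE n).nullMeasurableSet)
        (fun a b hab x hx => ⟨hx.1, fun h => hx.2 (by
          simp only [Set.mem_iUnion] at h ⊢
          obtain ⟨j, hj, h⟩ := h
          exact ⟨j, by omega, h⟩)⟩) ⟨0, measure_ne_top _ _⟩
      have e : (⋂ n : ℕ, (⋃ n, A n) \ ⋃ j < n, A j) = ∅ := by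
        ext x
        simp only [Set.mem_iInter, Set.mem_empty_iff_false, iff_false]
        intro h
        obtain ⟨j, hj⟩ := Set.mem_iUnion.1 (h 0).1
        refine (h (j + 1)).2 ?_
        simp only [Set.mem_iUnion]
        exact ⟨j, by omega, hj⟩
      rw [e, measure_empty] at h
      have := (ENNReal.tendsto_toReal ENNReal.zero_ne_top).comp h
      simp only [ENNReal.toReal_zero] at this
      exact this
    obtain ⟨n, hn⟩ := ((tendsto_ind hE (f := fun x => x ∈ ⋃ n, A n) hE0).eventually_le_const
      (u := ε / 2) (by linarith)).exists
    obtain ⟨i, hi⟩ := approx_finset hg hs hdir hAm (fun n => (hA n).2) n (ε / 2) (by linarith)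
    refine ⟨i, ?_⟩
    have f1 : FM (fun x => fun j : Fin n => x ∈ A j) :=
      FM.pi (f := fun (j : Fin n) x => x ∈ A j) fun j => FM.prop (hAm j)
    have s1 := Hc_triangle (μ := μ) (FM.prop hU) f1 (hg i)
    have s2 := Hc_le_ind (μ := μ) (s := Set.univ) (by simp) (hE n) (FM.prop hU) f1 (by
      rintro x ⟨-, hx⟩ y ⟨-, hy⟩ h
      have key : ∀ z, z ∉ (⋃ n, A n) \ ⋃ j < n, A j → (z ∈ (⋃ n, A n) ↔ ∃ j : Fin n, z ∈ A j) := by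
        intro z hz
        constructor
        · intro h1
          by_contra h2
          refine hz ⟨h1, fun h3 => h2 ?_⟩
          simp only [Set.mem_iUnion] at h3
          obtain ⟨j, hj, h⟩ := h3
          exact ⟨⟨j, hj⟩, h⟩
        · rintro ⟨j, hj⟩
          exact Set.mem_iUnion.2 ⟨j, hj⟩
      apply propext
      beta_reduce
      rw [key x hx, key y hy]
      exact exists_congr fun j => iff_of_eq (congrFun h j))
    linarith

lemma approx_label (hg : ∀ i, FM (g i)) {s : Set Ω} (hs : μ sᶜ = 0)
    (hdir : ∀ i j, ∃ l, Det s (g i) (g l) ∧ Det s (g j) (g l)) [Nonempty I]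
    (hap : ∀ A, MeasurableSet A → ∀ ε > 0, ∃ i, Hc μ (fun x => x ∈ A) (g i) ≤ ε)
    {a : ℕ} {q : Ω → Fin a} (hq : FM q) {ε : ℝ} (hε : 0 < ε) : ∃ i, Hc μ q (g i) ≤ ε := by
  have hm : ∀ n : ℕ, MeasurableSet {x | (q x : ℕ) = n} := fun n => hq.meas {j | (j : ℕ) = n}
  obtain ⟨i, hi⟩ := approx_finset (μ := μ) hg hs hdir (A := fun n => {x | (q x : ℕ) = n}) hm
    (fun n => hap _ (hm n)) a ε hε
  refine ⟨i, le_trans (Hc_mono (s := Set.univ) (by simp) hq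
    (FM.pi (f := fun (j : Fin a) x => x ∈ {x | (q x : ℕ) = j}) fun j => FM.prop (hm j)) (hg i) ?_) hi⟩
  intro x _ y _ h
  simp only [Prod.mk.injEq] at h
  have := congrFun h.1 (q y)
  simp only [Set.mem_ofPred_eq] at this
  have h2 : (q x : ℕ) = q y := by simpa using this
  exact Fin.ext h2

end Approx

section Circle

/-- Lebesgue measure on `[0,1)` -/
noncomputable def lam : Measure ℝ := volume.restrict (Set.Ico 0 1)

instance : IsProbabilityMeasure lam := ⟨by simp [lam]⟩

/-- the partition into `k` intervals -/
noncomputable def J (k : ℕ) (θ : ℝ) : Fin (k + 1) := Fin.ofNat (k + 1) (min ⌊k * θ⌋₊ k)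

lemma FM_J (k : ℕ) : FM (J k) :=
  FM_nat (f := fun θ : ℝ => ⌊k * θ⌋₊) (Nat.measurable_floor.comp (measurable_const_mul _))
    (fun j => Fin.ofNat (k + 1) (min j k))

lemma J_eq {k : ℕ} (hk : 0 < k) {θ θ' : ℝ} (h : θ ∈ Set.Ico (0 : ℝ) 1) (h' : θ' ∈ Set.Ico (0 : ℝ) 1) :
    J k θ = J k θ' ↔ ⌊k * θ⌋₊ = ⌊k * θ'⌋₊ := by
  have key : ∀ θ : ℝ, θ ∈ Set.Ico (0 : ℝ) 1 → ⌊k * θ⌋₊ < k := by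
    intro θ h
    rw [Nat.floor_lt' hk.ne']
    have : (0 : ℝ) < k := by exact_mod_cast hk
    nlinarith [h.2]
  have e1 := key θ h
  have e2 := key θ' h'
  unfold J
  rw [Fin.ext_iff]
  simp only [Fin.ofNat_eq_cast, Fin.val_natCast]
  rw [Nat.mod_eq_of_lt (by omega), Nat.mod_eq_of_lt (by omega)]
  omega

lemma floor_close {k : ℕ} (hk : 0 < k) {θ θ' : ℝ} (h : 0 ≤ θ) (h' : 0 ≤ θ')
    (e : ⌊k * θ⌋₊ = ⌊k * θ'⌋₊) : |θ - θ'| < 1 / k := by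
  have hk' : (0 : ℝ) < k := by exact_mod_cast hk
  have a1 := Nat.floor_le (a := k * θ) (by positivity)
  have a2 := Nat.lt_floor_add_one (k * θ)
  have b1 := Nat.floor_le (a := k * θ') (by positivity)
  have b2 := Nat.lt_floor_add_one (k * θ')
  rw [e] at a1 a2
  rw [abs_lt, lt_div_iff₀ hk', neg_lt, lt_div_iff₀ hk']
  constructor <;> nlinarith

lemma lam_map (c : ℝ) : lam.map (fun θ => Int.fract (θ - c)) = lam := by
  have hm : Measurable fun θ : ℝ => Int.fract (θ - c) :=
    measurable_fract.comp (measurable_id.sub_const c)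
  refine Measure.ext_of_lintegral _ fun g hg => ?_
  rw [lintegral_map hg hm]
  unfold lam
  rw [setLIntegral_congr (Ico_ae_eq_Ioc (a := (0 : ℝ)) (b := 1))]
  have hper : ∀ f : ℝ → ENNReal, (∀ (n : ℤ) (x : ℝ), f (n + x) = f x) →
      ∫⁻ x in Set.Ioc (0 : ℝ) 1, f x = ∫⁻ x in Set.Ioc c (c + 1), f x := by
    intro f hf
    have h1 := isAddFundamentalDomain_Ioc (T := (1 : ℝ)) one_pos 0 volume
    have h2 := isAddFundamentalDomain_Ioc (T := (1 : ℝ)) one_pos c volume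
    rw [zero_add] at h1
    refine h1.setLIntegral_eq h2 f ?_
    rintro ⟨g, hg⟩ x
    obtain ⟨n, rfl⟩ := AddSubgroup.mem_zmultiples_iff.1 hg
    have := hf n x
    simpa [AddSubgroup.vadd_def] using this
  rw [hper (fun θ => g (Int.fract (θ - c))) (by
    intro n x
    rw [add_sub_assoc, Int.fract_intCast_add])]
  have e1 : ∫⁻ x in Set.Ioc c (c + 1), g (Int.fract (x - c)) = ∫⁻ x in Set.Ioc (0 : ℝ) 1, g (Int.fract x) := by
    rw [← lintegral_indicator measurableSet_Ioc, ← lintegral_indicator measurableSet_Ioc]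
    rw [← lintegral_sub_right_eq_self ((Set.Ioc (0 : ℝ) 1).indicator fun x => g (Int.fract x)) c]
    refine lintegral_congr fun x => ?_
    simp only [Set.indicator, Set.mem_Ioc]
    refine if_congr ?_ rfl rfl
    constructor <;> rintro ⟨h1, h2⟩ <;> constructor <;> linarith
  rw [e1, setLIntegral_congr (Ico_ae_eq_Ioc (a := (0 : ℝ)) (b := 1)).symm]
  refine setLIntegral_congr_fun measurableSet_Ico fun x hx => ?_
  rw [Int.fract_eq_self.2 hx]

end Circle
end Abr

open MeasureTheory Filter
namespace Abr
open Real (negMulLog)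
open scoped Topology
set_option linter.unusedSectionVars false
set_option linter.unusedFintypeInType false

section Ext
variable {X : Type*} [MeasurableSpace X] {μt : Measure X} [IsProbabilityMeasure μt]
variable {σ : X → X} {b : X → ℝ}

/-- circle extension -/
noncomputable def cF (σ : X → X) (b : X → ℝ) (p : X × ℝ) : X × ℝ :=
  (σ p.1, Int.fract (p.2 - b p.1))

/-- full measure set -/
def cS (X : Type*) : Set (X × ℝ) := {p | p.2 ∈ Set.Ico (0 : ℝ) 1}

lemma meas_cS : MeasurableSet (cS X) := measurable_snd measurableSet_Ico

lemma cS_compl : (μt.prod lam) (cS X)ᶜ = 0 := by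
  have : (cS X)ᶜ = Set.univ ×ˢ (Set.Ico (0 : ℝ) 1)ᶜ := by ext x; simp [cS]
  rw [this, Measure.prod_prod]
  unfold lam
  rw [Measure.restrict_apply measurableSet_Ico.compl]; simp

lemma mp_cF (hσ : MeasurePreserving σ μt μt) (hb : Measurable b) :
    MeasurePreserving (cF σ b) (μt.prod lam) (μt.prod lam) := by
  refine hσ.skew_product (g := fun x θ => Int.fract (θ - b x)) ?_ ?_
  · exact measurable_fract.comp (measurable_snd.sub (hb.comp measurable_fst))
  · exact Filter.Eventually.of_forall fun x => lam_map (b x)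

lemma cF_iter (i : ℕ) (p : X × ℝ) (hp : p ∈ cS X) :
    (cF σ b)^[i] p = (σ^[i] p.1, Int.fract (p.2 - birk σ b i p.1)) := by
  induction i with
  | zero =>
    simp only [Function.iterate_zero, id_eq, birk, Finset.range_zero, Finset.sum_empty, sub_zero]
    rw [Int.fract_eq_self.2 hp]
  | succ i ih =>
    rw [Function.iterate_succ_apply', ih, Function.iterate_succ_apply']
    unfold cF birk
    simp only [Prod.mk.injEq, true_and]
    rw [Finset.sum_range_succ, Int.fract_eq_fract]
    refine ⟨-⌊p.2 - ∑ j ∈ Finset.range i, b (σ^[j] p.1)⌋, ?_⟩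
    rw [Int.fract]; push_cast; ring

lemma meas_birk (hσ : Measurable σ) (hb : Measurable b) (i : ℕ) : Measurable (birk σ b i) := by
  unfold birk
  exact Finset.measurable_sum _ fun j _ => hb.comp (hσ.iterate j)

lemma prod_real_snd {E : Set ℝ} : (μt.prod lam).real {p : X × ℝ | p.2 ∈ E} = lam.real E := by
  have : {p : X × ℝ | p.2 ∈ E} = Set.univ ×ˢ E := by ext x; simp
  rw [this, measureReal_def, Measure.prod_prod, measure_univ, one_mul]; rfl

/-- bad set near the grid -/
def bad (k M : ℕ) : Set ℝ :=
  {t | Int.fract (k * t) < 2 * k / (M + 1 : ℝ) ∨ 1 - 2 * k / (M + 1 : ℝ) < Int.fract (k * t)}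

lemma meas_bad (k M : ℕ) : MeasurableSet (bad k M) := by
  have : Measurable fun t : ℝ => Int.fract (k * t) := measurable_fract.comp (measurable_const_mul _)
  exact (measurableSet_lt this measurable_const).union (measurableSet_lt measurable_const this)

lemma tendsto_bad {k : ℕ} (hk : 0 < k) : Tendsto (fun M => lam.real (bad k M)) atTop (𝓝 0) := by
  have hk' : (0 : ℝ) < k := by exact_mod_cast hk
  have h := tendsto_measure_iInter_atTop (μ := lam) (s := fun M : ℕ => bad k M)
    (fun n => (meas_bad k n).nullMeasurableSet)
    (fun a c hac x hx => by
      have : 2 * k / (c + 1 : ℝ) ≤ 2 * k / (a + 1 : ℝ) := by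
        have : (a : ℝ) ≤ c := by exact_mod_cast hac
        gcongr
      rcases hx with hx | hx
      · left; linarith
      · right; linarith) ⟨0, measure_ne_top _ _⟩
  have ht : Tendsto (fun M : ℕ => 2 * k / (M + 1 : ℝ)) atTop (𝓝 0) := by
    have := (tendsto_one_div_add_atTop_nhds_zero_nat (𝕜 := ℝ)).const_mul (2 * k : ℝ)
    rw [mul_zero] at this
    refine this.congr fun n => ?_
    ring
  have e : (⋂ M : ℕ, bad k M) ⊆ Set.range (fun n : ℤ => (n : ℝ) / k) := by
    intro t ht'
    rw [Set.mem_iInter] at ht'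
    by_contra hne
    have hpos : 0 < Int.fract (k * t) := by
      refine lt_of_le_of_ne (Int.fract_nonneg _) fun h0 => hne ⟨⌊k * t⌋, ?_⟩
      have := Int.self_sub_floor (k * t)
      simp only
      rw [div_eq_iff hk'.ne']
      linarith
    have hlt := Int.fract_lt_one (k * t)
    obtain ⟨M, h1, h2⟩ := ((ht.eventually_lt_const hpos).and
      (ht.eventually_lt_const (sub_pos.2 hlt))).exists
    rcases ht' M with h | h
    · linarith
    · linarith
  have e0 : lam (⋂ M : ℕ, bad k M) = 0 := by
    have : volume (⋂ M : ℕ, bad k M) = 0 :=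
      measure_mono_null e ((Set.countable_range _).measure_zero _)
    exact Measure.absolutelyContinuous_of_le Measure.restrict_le_self this
  rw [e0] at h
  have := (ENNReal.tendsto_toReal ENNReal.zero_ne_top).comp h
  simp only [ENNReal.toReal_zero] at this
  exact this

lemma floor_stable {k M : ℕ} (hk : 0 < k) {θ θ' B B' : ℝ}
    (h1 : |θ - θ'| < 1 / (M + 1 : ℝ)) (h2 : |Int.fract B - Int.fract B'| < 1 / (M + 1 : ℝ))
    (hb : Int.fract (θ - B) ∉ bad k M) :
    ⌊k * Int.fract (θ - B)⌋₊ = ⌊k * Int.fract (θ' - B')⌋₊ := by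
  have hk' : (0 : ℝ) < k := by exact_mod_cast hk
  set t := Int.fract (θ - B) with ht
  set t' := Int.fract (θ' - B') with ht'
  have hb : 2 * k / (M + 1 : ℝ) ≤ Int.fract (k * t) ∧ Int.fract (k * t) ≤ 1 - 2 * k / (M + 1 : ℝ) := by
    constructor
    · by_contra h; exact hb (Or.inl (not_le.1 h))
    · by_contra h; exact hb (Or.inr (not_le.1 h))
  -- `t' = t - δ + m`
  obtain ⟨δ, m, hδ, hm⟩ : ∃ (δ : ℝ) (m : ℤ), |δ| < 2 * (1 / (M + 1 : ℝ)) ∧ t' = t + δ + m := by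
    refine ⟨(θ' - θ) + (Int.fract B - Int.fract B'),
      ⌊θ - B⌋ - ⌊θ' - B'⌋ - ⌊B'⌋ + ⌊B⌋, ?_, ?_⟩
    · rw [abs_sub_comm] at h1
      calc _ ≤ |θ' - θ| + |Int.fract B - Int.fract B'| := abs_add_le _ _
        _ < _ := by linarith
    · rw [ht, ht']; unfold Int.fract; push_cast; ring
  have hkd : |k * δ| < 2 * k / (M + 1 : ℝ) := by
    rw [abs_mul, abs_of_pos hk']
    calc k * |δ| < k * (2 * (1 / (M + 1 : ℝ))) := by gcongr
      _ = _ := by ring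
  rw [abs_lt] at hkd
  have hfl : ⌊k * t'⌋ = ⌊k * t⌋ + k * m := by
    rw [Int.floor_eq_iff]
    have := Int.self_sub_floor (k * t)
    push_cast
    rw [hm]
    constructor
    · nlinarith
    · nlinarith
  have r1 : 0 ≤ t := Int.fract_nonneg _
  have r2 : t < 1 := Int.fract_lt_one _
  have r3 : 0 ≤ t' := Int.fract_nonneg _
  have r4 : t' < 1 := Int.fract_lt_one _
  have q1 : 0 ≤ ⌊k * t⌋ := Int.floor_nonneg.2 (by positivity)
  have q3 : 0 ≤ ⌊k * t'⌋ := Int.floor_nonneg.2 (by positivity)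
  have q2 : ⌊k * t⌋ < k := by rw [Int.floor_lt]; push_cast; nlinarith
  have q4 : ⌊k * t'⌋ < k := by rw [Int.floor_lt]; push_cast; nlinarith
  have hm0 : m = 0 := by
    have hkz : (0 : ℤ) < k := by exact_mod_cast hk
    have c1 : (k : ℤ) * m < k * 1 := by linarith
    have c2 : (k : ℤ) * (-1) < k * m := by linarith
    have := lt_of_mul_lt_mul_left c1 hkz.le
    have := lt_of_mul_lt_mul_left c2 hkz.le
    omega
  rw [hm0, mul_zero, add_zero] at hfl
  rw [← Int.floor_toNat, ← Int.floor_toNat, hfl]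

lemma hh_ext_le (hσ : MeasurePreserving σ μt μt) (hb : Measurable b) {a : ℕ} {P : X → Fin a}
    (hP : FM P) {k : ℕ} (hk : 0 < k) {ε : ℝ} (hε : 0 < ε) :
    ∃ (β : Type) (_ : Fintype β) (R : X → β), FM R ∧
      hh (μt.prod lam) (cF σ b) (fun p => (P p.1, J k p.2)) ≤ hh μt σ R + ε := by
  set ν := μt.prod lam with hν
  set F := cF σ b with hFdef
  have hF : MeasurePreserving F ν ν := mp_cF hσ hb
  have hJ : FM (fun p : X × ℝ => J k p.2) := (FM_J k).comp_meas measurable_snd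
  have hP1 : FM (fun p : X × ℝ => P p.1) := hP.comp_meas measurable_fst
  set Q := fun p : X × ℝ => (P p.1, J k p.2) with hQdef
  have hQ : FM Q := hP1.pair hJ
  have hBm : ∀ M, MeasurableSet {p : X × ℝ | p.2 ∈ bad k M} := fun M =>
    measurable_snd (meas_bad k M)
  obtain ⟨M, hM⟩ := ((tendsto_ind (μ := ν) hBm (f := fun p : X × ℝ => J k p.2) (by
    simp_rw [hν, prod_real_snd]; exact tendsto_bad hk)).eventually_le_const
      (u := ε / 2) (by linarith)).exists
  obtain ⟨L, hL0, hL⟩ : ∃ L : ℕ, 0 < L ∧ Real.log (M + 2) ≤ L * (ε / 2) := by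
    obtain ⟨L, hL⟩ := exists_nat_gt (Real.log (M + 2) / (ε / 2))
    refine ⟨L + 1, by omega, ?_⟩
    rw [div_lt_iff₀ (by linarith)] at hL
    push_cast
    nlinarith
  set R := fun x => (name σ P L x, fun i : Fin L => J (M + 1) (Int.fract (birk σ b i x))) with hR
  have hRm : FM R := by
    refine (hP.name hσ.measurable L).pair ?_
    refine FM.pi (f := fun (i : Fin L) x => J (M + 1) (Int.fract (birk σ b i x))) fun i => ?_
    exact (FM_J (M + 1)).comp_meas (measurable_fract.comp (meas_birk hσ.measurable hb i))
  have hR1 : FM (fun p : X × ℝ => R p.1) := hRm.comp_meas measurable_fst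
  have hJM : FM (fun p : X × ℝ => J (M + 1) p.2) := (FM_J (M + 1)).comp_meas measurable_snd
  refine ⟨_, inferInstance, R, hRm, ?_⟩
  have hLr : (0 : ℝ) < L := by exact_mod_cast hL0
  have s1 := hh_pow hF hQ hL0
  have hN : FM (name F Q L) := hQ.name hF.measurable L
  have s2 := hh_le_add (hF.iterate L) hN hR1
  have hmap : ν.map Prod.fst = μt := by rw [hν, Measure.map_fst_prod]; simp
  have hit : ∀ (n : ℕ) (x : X × ℝ), (F^[n] x).1 = σ^[n] x.1 := by
    intro n x
    have : Function.Semiconj Prod.fst F σ := fun x => rfl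
    exact (this.iterate_right n) x
  have s3 : hh ν F^[L] (fun p => R p.1) = hh μt σ^[L] R := by
    conv_rhs => rw [← hmap]
    rw [hh_factor (μ := ν) (T := F^[L]) (D := Set.univ) measurable_fst (hσ.measurable.iterate L)
      (by simp) (by simp) (fun x _ => hit L x) hRm]
  have s4 : hh μt σ^[L] R ≤ L * hh μt σ R := by
    rw [← hh_pow hσ hRm hL0]
    exact hh_mono (hσ.iterate L) (s := Set.univ) (by simp) hRm (hRm.name hσ.measurable L)
      (by intro x _ y _ h; exact name_eq_iff.1 h 0 hL0)
  -- the fibre entropy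
  have s5 : Hc ν (name F Q L) (fun p => R p.1) ≤
      Hc ν (name F Q L) (fun p => (J (M + 1) p.2, R p.1)) + Hc ν (fun p => J (M + 1) p.2) (fun p => R p.1) := by
    rw [← Hc_chain]
    exact Hc_mono (s := Set.univ) (by simp) hN (hN.pair hJM) hR1 (by
      intro x _ y _ h; simp only [Prod.mk.injEq] at h; exact h.1.1)
  have s6 : Hc ν (fun p => J (M + 1) p.2) (fun p => R p.1) ≤ Real.log (M + 2) := by
    refine (Hc_le_H hJM hR1).trans ((H_le_log hJM).trans (le_of_eq ?_))
    simp only [probReal_univ, Fintype.card_fin, one_mul]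
    push_cast
    ring_nf
  have s7 : ∀ i : Fin L, Hc ν (fun p => Q (F^[i] p)) (fun p => (J (M + 1) p.2, R p.1)) ≤ ε / 2 := by
    intro i
    have hJi : FM (fun p => J k (F^[i] p).2) := hJ.comp_meas (hF.measurable.iterate i)
    refine le_trans ?_ hM
    have e1 : Hc ν (fun p => Q (F^[i] p)) (fun p => (J (M + 1) p.2, R p.1)) ≤
        Hc ν (fun p => J k (F^[i] p).2) (fun p => (J (M + 1) p.2, R p.1)) := by
      refine Hc_mono (s := Set.univ) (by simp) (hQ.comp_meas (hF.measurable.iterate i)) hJi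
        (hJM.pair hR1) ?_
      intro x _ y _ h
      simp only [Prod.mk.injEq, hQdef, hR] at h ⊢
      refine ⟨?_, h.1⟩
      rw [hit, hit]
      exact name_eq_iff.1 h.2.2.1 i i.2
    refine e1.trans ?_
    have e2 := Hc_le_ind (μ := ν) (s := cS X) cS_compl
      (E := F^[i] ⁻¹' {p : X × ℝ | p.2 ∈ bad k M}) (hF.measurable.iterate i (hBm M)) hJi
      (hJM.pair hR1) (by
        rintro x ⟨hx, hxb⟩ y ⟨hy, hyb⟩ h
        simp only [Prod.mk.injEq, hR] at h
        have hfr : ∀ z : ℝ, Int.fract z ∈ Set.Ico (0 : ℝ) 1 := fun z =>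
          ⟨Int.fract_nonneg _, Int.fract_lt_one _⟩
        have hJ1 := congrFun h.2.2 i
        have hc1 := floor_close (Nat.succ_pos M) hx.1 hy.1 ((J_eq (Nat.succ_pos M) hx hy).1 h.1)
        have hc2 := floor_close (Nat.succ_pos M) (hfr _).1 (hfr _).1
          ((J_eq (Nat.succ_pos M) (hfr _) (hfr _)).1 hJ1)
        simp only [Set.mem_preimage, Set.mem_ofPred_eq] at hxb
        rw [hFdef, cF_iter _ _ hx] at hxb
        beta_reduce
        rw [hFdef, cF_iter _ _ hx, cF_iter _ _ hy]
        rw [J_eq hk (hfr _) (hfr _)]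
        push_cast at hc1 hc2
        exact floor_stable hk hc1 hc2 hxb)
    refine e2.trans (le_of_eq ?_)
    congr 1
    have e3 := H_inv (hF.iterate i) (hJ.ind (hBm M))
    rw [← e3]
    rfl
  have s8 : Hc ν (name F Q L) (fun p => (J (M + 1) p.2, R p.1)) ≤ L * (ε / 2) := by
    refine (Hc_pi_le L (f := fun (i : Fin L) p => Q (F^[i] p))
      (fun i => hQ.comp_meas (hF.measurable.iterate i)) (hJM.pair hR1)).trans ?_
    refine (Finset.sum_le_sum fun i _ => s7 i).trans (le_of_eq ?_)
    simp
  have : L * hh ν F Q ≤ L * (hh μt σ R + ε) := by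
    rw [← s1]
    rw [s3] at s2
    linarith
  exact le_of_mul_le_mul_left this hLr

end Ext
end Abr

open MeasureTheory Filter
namespace Abr
open Real (negMulLog)
open scoped Topology
set_option linter.unusedSectionVars false
set_option linter.unusedFintypeInType false

section Ext2
variable {X : Type*} [MeasurableSpace X] {μt : Measure X} [IsProbabilityMeasure μt]
variable {σ : X → X} {b : X → ℝ}

/-- product labellings -/
structure PL (X : Type*) [MeasurableSpace X] where
  n : ℕ
  P : X → Fin n
  hP : FM P
  k : ℕ
  hk : 0 < k

/-- label map -/
noncomputable def PL.g (i : PL X) (p : X × ℝ) : Fin i.n × Fin (i.k + 1) := (i.P p.1, J i.k p.2)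

lemma PL.FM_g (i : PL X) : FM i.g :=
  (i.hP.comp_meas measurable_fst).pair ((FM_J i.k).comp_meas measurable_snd)

lemma J_refine {k l : ℕ} (hk : 0 < k) (hl : 0 < l) {θ θ' : ℝ} (h : θ ∈ Set.Ico (0 : ℝ) 1)
    (h' : θ' ∈ Set.Ico (0 : ℝ) 1) (e : J (k * l) θ = J (k * l) θ') : J k θ = J k θ' := by
  rw [J_eq (Nat.mul_pos hk hl) h h'] at e
  rw [J_eq hk h h']
  have hl' : (l : ℝ) ≠ 0 := by exact_mod_cast hl.ne'
  have key : ∀ θ : ℝ, (k : ℝ) * θ = ((k * l : ℕ) : ℝ) * θ / (l : ℝ) := by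
    intro θ; push_cast; field_simp
  rw [key θ, key θ', Nat.floor_div_natCast, Nat.floor_div_natCast, e]

lemma PL.dir (i j : PL X) : ∃ l : PL X, Det (cS X) i.g l.g ∧ Det (cS X) j.g l.g := by
  refine ⟨⟨_, fun x => Fintype.equivFin (Fin i.n × Fin j.n) (i.P x, j.P x),
    (i.hP.pair j.hP).comp _, i.k * j.k, Nat.mul_pos i.hk j.hk⟩, ?_, ?_⟩
  · intro x hx y hy h
    simp only [PL.g, Prod.mk.injEq, EmbeddingLike.apply_eq_iff_eq] at h ⊢
    exact ⟨h.1.1, J_refine i.hk j.hk hx hy h.2⟩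
  · intro x hx y hy h
    simp only [PL.g, Prod.mk.injEq, EmbeddingLike.apply_eq_iff_eq] at h ⊢
    refine ⟨h.1.2, J_refine j.hk i.hk hx hy ?_⟩
    have e := (J_eq (Nat.mul_pos i.hk j.hk) hx hy).1 h.2
    rw [J_eq (Nat.mul_pos j.hk i.hk) hx hy, mul_comm j.k]
    exact e

lemma lam_near (a : ℝ) : Tendsto (fun k : ℕ => lam.real (Metric.closedBall a (1 / ((k : ℝ) + 1))))
    atTop (𝓝 0) := by
  have ht := (tendsto_one_div_add_atTop_nhds_zero_nat (𝕜 := ℝ)).const_mul (2 : ℝ)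
  rw [mul_zero] at ht
  refine squeeze_zero (fun _ => measureReal_nonneg) (fun k => ?_) ht
  have h1 : lam (Metric.closedBall a (1 / ((k : ℝ) + 1))) ≤ ENNReal.ofReal (2 * (1 / ((k : ℝ) + 1))) := by
    rw [← Real.volume_closedBall]
    exact Measure.restrict_le_self _
  have := ENNReal.toReal_mono ENNReal.ofReal_ne_top h1
  rwa [ENNReal.toReal_ofReal (by positivity)] at this

instance : Nonempty (PL X) := ⟨⟨1, fun _ => 0, FM.const 0, 1, one_pos⟩⟩

lemma approx_prod (A : Set (X × ℝ)) (hA : MeasurableSet A) :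
    ∀ ε > 0, ∃ i : PL X, Hc (μt.prod lam) (fun x => x ∈ A) i.g ≤ ε := by
  obtain ⟨App, hApp⟩ : ∃ App : Set (X × ℝ) → Prop, App = fun A => (MeasurableSet A ∧
      ∀ ε > 0, ∃ i : PL X, Hc (μt.prod lam) (fun x => x ∈ A) i.g ≤ ε) := ⟨_, rfl⟩
  have g1 : ∀ B : Set X, MeasurableSet B → App (Prod.fst ⁻¹' B) := by
    intro B hB
    rw [hApp]
    refine ⟨measurable_fst hB, fun ε hε => ?_⟩
    refine ⟨⟨_, fun x => Fintype.equivFin Prop (x ∈ B), (FM.prop hB).comp _, 1, one_pos⟩, ?_⟩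
    rw [Hc_of_det (s := Set.univ) (by simp)]
    · exact hε.le
    · intro x _ y _ h
      simp only [PL.g, Prod.mk.injEq, EmbeddingLike.apply_eq_iff_eq] at h
      exact h.1
  have g2 : ∀ a : ℝ, App (Prod.snd ⁻¹' Set.Iio a) := by
    intro a
    rw [hApp]
    refine ⟨measurable_snd measurableSet_Iio, fun ε hε => ?_⟩
    have hE : ∀ k : ℕ, MeasurableSet {p : X × ℝ | p.2 ∈ Metric.closedBall a (1 / ((k : ℝ) + 1))} :=
      fun k => measurable_snd Metric.isClosed_closedBall.measurableSet
    have hf : FM (fun x : X × ℝ => x ∈ Prod.snd ⁻¹' Set.Iio a) :=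
      FM.prop (measurable_snd measurableSet_Iio)
    obtain ⟨k, hk⟩ := ((tendsto_ind (μ := μt.prod lam) hE
      (f := fun x : X × ℝ => x ∈ Prod.snd ⁻¹' Set.Iio a) (by
        simp_rw [prod_real_snd]; exact lam_near a)).eventually_le_const
      (u := ε) hε).exists
    let i : PL X := ⟨1, fun _ => 0, FM.const 0, k + 1, Nat.succ_pos k⟩
    refine ⟨i, le_trans (Hc_le_ind (s := cS X) cS_compl (hE k) hf i.FM_g ?_) hk⟩
    have key : ∀ x ∈ cS X, ∀ y ∈ cS X, x.2 ∉ Metric.closedBall a (1 / ((k : ℝ) + 1)) →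
        i.g x = i.g y → x.2 < a → y.2 < a := by
      intro x hx y hy hxE h hxa
      by_contra hya
      have e := (J_eq (Nat.succ_pos k) hx hy).1 (Prod.mk.inj h).2
      have := floor_close (Nat.succ_pos k) hx.1 hy.1 e
      push_cast at this
      apply hxE
      rw [Metric.mem_closedBall, Real.dist_eq]
      rw [abs_lt] at this
      rw [abs_le]
      push Not at hya
      constructor <;> linarith
    rintro x ⟨hx, hxE⟩ y ⟨hy, hyE⟩ h
    exact propext ⟨key x hx y hy hxE h, key y hy x hx hyE h.symm⟩
  suffices h : App A by rw [hApp] at h; exact h.2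
  obtain ⟨m, hm⟩ := approx_sigma (μ := μt.prod lam) (g := PL.g (X := X)) PL.FM_g
    (s := cS X) cS_compl PL.dir App hApp
  refine (hm A).1 ?_
  have h1 : MeasurableSpace.comap Prod.fst ‹MeasurableSpace X› ≤ m := by
    rintro _ ⟨B, hB, rfl⟩
    exact (hm _).2 (g1 B hB)
  have h2 : MeasurableSpace.comap Prod.snd (inferInstance : MeasurableSpace ℝ) ≤ m := by
    rw [MeasurableSpace.comap_le_iff_le_map, BorelSpace.measurable_eq (α := ℝ),
      borel_eq_generateFrom_Iio]
    refine MeasurableSpace.generateFrom_le ?_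
    rintro _ ⟨a, rfl⟩
    exact (hm _).2 (g2 a)
  exact sup_le h1 h2 A hA

lemma ent_ext (hσ : MeasurePreserving σ μt μt) (hb : Measurable b) :
    ent (μt.prod lam) (cF σ b) = ent μt σ := by
  have hF := mp_cF (μt := μt) hσ hb
  apply le_antisymm
  · refine ent_le fun a q hq ε hε => ?_
    obtain ⟨i, hi⟩ := approx_label (μ := μt.prod lam) (g := PL.g (X := X)) PL.FM_g
      (s := cS X) cS_compl PL.dir approx_prod hq (ε := ε / 2) (by linarith)
    obtain ⟨β, _, R, hR, hle⟩ := hh_ext_le hσ hb i.hP i.hk (ε := ε / 2) (by linarith)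
    have h1 := hh_le_add hF hq i.FM_g
    have h2 : hh (μt.prod lam) (cF σ b) q ≤ hh μt σ R + ε := by
      have : hh (μt.prod lam) (cF σ b) i.g ≤ hh μt σ R + ε / 2 := hle
      linarith
    refine (ENNReal.ofReal_le_ofReal h2).trans (ENNReal.ofReal_add_le.trans ?_)
    gcongr
    exact le_ent hσ hR
  · have hmap : (μt.prod lam).map Prod.fst = μt := by rw [Measure.map_fst_prod]; simp
    have := ent_factor_le (μ := μt.prod lam) (π := Prod.fst) (S := σ) (D := Set.univ) hF
      measurable_fst hσ.measurable (by simp) (by simp) (fun x _ => rfl)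
    rwa [hmap] at this

end Ext2
end Abr

open MeasureTheory Filter
namespace Abr
open Real (negMulLog)
open scoped Topology
set_option linter.unusedSectionVars false
set_option linter.unusedFintypeInType false

section Final
variable {X : Type*} [MeasurableSpace X] {μt : Measure X} [IsProbabilityMeasure μt]
variable {σ : X → X} {h : X → ℝ} {m : ℕ}

/-- scaled ceiling -/
def sb (h : X → ℝ) (m : ℕ) (x : X) : ℝ := m * h x

/-- number of unit steps -/
noncomputable def sk (h : X → ℝ) (m : ℕ) (p : X × ℝ) : ℕ := max 1 ⌈sb h m p.1 - p.2⌉₊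

/-- coding map -/
noncomputable def Phi (m : ℕ) (p : (X × ℝ) × ℕ) : X × ℝ := (p.1.1, (p.1.2 + p.2) / m)

/-- inverse coding map -/
noncomputable def Psi (m : ℕ) (z : X × ℝ) : (X × ℝ) × ℕ := ((z.1, Int.fract (m * z.2)), ⌊m * z.2⌋₊)

/-- good part of the tower -/
def gD (h : X → ℝ) (m : ℕ) : Set ((X × ℝ) × ℕ) := {p | p.1 ∈ cS X ∧ p ∈ tower (sk h m)}

lemma meas_sb (hm : Measurable h) : Measurable (sb h m) := hm.const_mul _

lemma meas_sk (hm : Measurable h) : Measurable (sk h m) := by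
  unfold sk
  exact measurable_const.max (Nat.measurable_ceil.comp
    (((meas_sb hm).comp measurable_fst).sub measurable_snd))

lemma sk_pos (p : X × ℝ) : 1 ≤ sk h m p := le_max_left _ _

lemma lt_sk (hb : ∀ x, 1 ≤ sb h m x) {p : X × ℝ} (hp : p ∈ cS X) (j : ℕ) :
    j < sk h m p ↔ p.2 + j < sb h m p.1 := by
  unfold sk
  rw [lt_max_iff, Nat.lt_ceil]
  have h1 := hb p.1
  have h2 : p.2 < 1 := hp.2
  constructor
  · rintro (h | h)
    · have : j = 0 := by omega
      subst this; push_cast; linarith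
    · linarith
  · intro h; right; linarith

lemma meas_Phi : Measurable (Phi (X := X) m) := by
  unfold Phi
  refine (measurable_fst.comp measurable_fst).prodMk ?_
  refine Measurable.div_const ?_ _
  exact (measurable_snd.comp measurable_fst).add ((measurable_from_nat (f := fun n : ℕ => (n : ℝ))).comp measurable_snd)

lemma meas_Psi : Measurable (Psi (X := X) m) := by
  unfold Psi
  have h1 : Measurable fun z : X × ℝ => (m : ℝ) * z.2 := measurable_snd.const_mul _
  exact (measurable_fst.prodMk (measurable_fract.comp h1)).prodMk (Nat.measurable_floor.comp h1)

lemma gD_compl (hm : Measurable h) : tM (μt.prod lam) (sk h m) (gD h m)ᶜ = 0 := by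
  have hk := meas_sk (m := m) hm
  have : (gD h m)ᶜ ⊆ (Prod.fst ⁻¹' (cS X)ᶜ) ∪ (tower (sk h m))ᶜ := by
    intro p hp
    by_contra hc
    rw [Set.mem_union, not_or] at hc
    exact hp ⟨not_not.1 hc.1, not_not.1 hc.2⟩
  refine measure_mono_null this (measure_union_null ?_ (tM_compl hk))
  rw [tM_apply hk (measurable_fst meas_cS.compl)]
  rw [lintegral_eq_zero_iff']
  · have h0 : ∀ᵐ y ∂(μt.prod lam), y ∈ cS X := cS_compl
    filter_upwards [h0] with y hy
    refine Finset.sum_eq_zero fun j _ => ?_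
    rw [Set.indicator_of_notMem]
    simpa using hy
  · refine AEMeasurable.congr (f := fun _ => 0) aemeasurable_const ?_
    have h0 : ∀ᵐ y ∂(μt.prod lam), y ∈ cS X := cS_compl
    filter_upwards [h0] with y hy
    symm
    refine Finset.sum_eq_zero fun j _ => ?_
    rw [Set.indicator_of_notMem]
    simpa using hy

lemma gD_inv (p) (hp : p ∈ gD h m) : tT (cF σ (sb h m)) (sk h m) p ∈ gD h m := by
  refine ⟨?_, tT_mem sk_pos p⟩
  unfold tT
  split_ifs
  · exact hp.1
  · exact ⟨Int.fract_nonneg _, Int.fract_lt_one _⟩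

lemma gD_iter (hb : ∀ x, 1 ≤ sb h m x) (p) (hp : p ∈ gD h m) (i : ℕ) :
    ∃ n, (tT (cF σ (sb h m)) (sk h m))^[i] p ∈ gD h m ∧
      ((tT (cF σ (sb h m)) (sk h m))^[i] p).1.1 = σ^[n] p.1.1 ∧
      ((tT (cF σ (sb h m)) (sk h m))^[i] p).1.2 + ((tT (cF σ (sb h m)) (sk h m))^[i] p).2
        = p.1.2 + p.2 + i - birk σ (sb h m) n p.1.1 := by
  induction i with
  | zero => exact ⟨0, hp, rfl, by simp [birk]⟩
  | succ i ih =>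
    obtain ⟨n, hD, h1, h2⟩ := ih
    rw [Function.iterate_succ_apply']
    set q := (tT (cF σ (sb h m)) (sk h m))^[i] p with hq
    have hD' := gD_inv (σ := σ) q hD
    by_cases ht : q ∈ top (sk h m)
    · refine ⟨n + 1, hD', ?_, ?_⟩
      · rw [tT_top ht, Function.iterate_succ_apply', ← h1]; rfl
      · rw [tT_top ht]
        have e1 := (lt_sk hb hD.1 q.2).1 hD.2
        have e2 : ¬ q.1.2 + (q.2 + 1 : ℕ) < sb h m q.1.1 := fun h => ht ((lt_sk hb hD.1 (q.2 + 1)).2 h)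
        push_cast at e2
        have e3 : Int.fract (q.1.2 - sb h m q.1.1) = q.1.2 + q.2 + 1 - sb h m q.1.1 := by
          rw [Int.fract_eq_iff]
          refine ⟨by linarith, by linarith, -(q.2 + 1), ?_⟩
          push_cast; ring
        simp only [cF]
        rw [e3, birk, Finset.sum_range_succ, ← h1]
        rw [birk] at h2
        push_cast
        linarith
    · refine ⟨n, hD', ?_, ?_⟩
      · rw [tT_not_top ht, ← h1]
      · rw [tT_not_top ht]
        push_cast
        linarith

lemma birk_sb (n : ℕ) (x : X) : birk σ (sb h m) n x = m * birk σ h n x := by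
  unfold birk sb
  rw [Finset.mul_sum]

lemma birk_mono (hpos : ∀ x, 0 < h x) (x : X) : Monotone fun n => birk σ h n x := by
  refine monotone_nat_of_le_succ fun n => ?_
  simp only [birk, Finset.sum_range_succ]
  linarith [hpos (σ^[n] x)]

lemma Phi_mem (hm0 : 0 < m) (hb : ∀ x, 1 ≤ sb h m x) {p} (hp : p ∈ gD h m) :
    Phi m p ∈ suspDom h := by
  have hm' : (0 : ℝ) < m := by exact_mod_cast hm0
  have h0 : 0 ≤ p.1.2 := hp.1.1
  refine ⟨by simp only [Phi]; positivity, ?_⟩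
  have := (lt_sk hb hp.1 p.2).1 hp.2
  simp only [Phi]
  rw [div_lt_iff₀ hm', mul_comm]
  exact this

lemma conj (hm0 : 0 < m) (hb : ∀ x, 1 ≤ sb h m x) (hpos : ∀ x, 0 < h x)
    {S : X × ℝ → X × ℝ} (hS : IsSuspMap σ h 1 S) {p} (hp : p ∈ gD h m) :
    Phi m ((tT (cF σ (sb h m)) (sk h m))^[m] p) = S (Phi m p) := by
  have hm' : (0 : ℝ) < m := by exact_mod_cast hm0
  obtain ⟨n, hD, h1, h2⟩ := gD_iter (σ := σ) hb p hp m
  set q := (tT (cF σ (sb h m)) (sk h m))^[m] p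
  have hq := Phi_mem hm0 hb hD
  have hp' := Phi_mem hm0 hb hp
  obtain ⟨l, a1, a2, a3⟩ := hS (Phi m p).1 (Phi m p).2 hp'.1 hp'.2
  have e : (Phi m q).2 = (Phi m p).2 + 1 - birk σ h n p.1.1 := by
    simp only [Phi]
    rw [h2, birk_sb]
    field_simp
  have c1 : birk σ h n p.1.1 ≤ (Phi m p).2 + 1 := by linarith [hq.1]
  have c2 : (Phi m p).2 + 1 < birk σ h (n + 1) p.1.1 := by
    have := hq.2
    rw [e] at this
    rw [birk, Finset.sum_range_succ]
    change _ < h q.1.1 at this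
    rw [h1] at this
    rw [birk] at this
    linarith
  have mono := birk_mono (σ := σ) hpos p.1.1
  change birk σ h l p.1.1 ≤ _ at a1
  change _ < birk σ h (l + 1) p.1.1 at a2
  have hnl : n = l := by
    rcases lt_trichotomy n l with hlt | heq | hlt
    · have : birk σ h (n + 1) p.1.1 ≤ birk σ h l p.1.1 := mono hlt
      linarith
    · exact heq
    · have : birk σ h (l + 1) p.1.1 ≤ birk σ h n p.1.1 := mono hlt
      linarith
  subst hnl
  rw [show Phi m p = ((Phi m p).1, (Phi m p).2) from rfl, a3]
  exact Prod.ext h1 e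

lemma Psi_Phi (hm0 : 0 < m) {p : (X × ℝ) × ℕ} (hp : p ∈ gD h m) : Psi m (Phi m p) = p := by
  have hm' : (0 : ℝ) < m := by exact_mod_cast hm0
  have e : (m : ℝ) * ((p.1.2 + p.2) / m) = p.1.2 + p.2 := by field_simp
  simp only [Psi, Phi, e]
  refine Prod.ext (Prod.ext rfl ?_) ?_
  · simp only
    rw [Int.fract_add_natCast, Int.fract_eq_self.2 hp.1]
  · simp only
    rw [Nat.floor_add_natCast hp.1.1, Nat.floor_eq_zero.2 hp.1.2, zero_add]

lemma Phi_Psi (hm0 : 0 < m) {z : X × ℝ} (hz : z ∈ suspDom h) : Phi m (Psi m z) = z := by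
  have hm' : (0 : ℝ) < m := by exact_mod_cast hm0
  simp only [Psi, Phi]
  refine Prod.ext rfl ?_
  simp only
  have h0 : 0 ≤ (m : ℝ) * z.2 := mul_nonneg hm'.le hz.1
  rw [natCast_floor_eq_intCast_floor h0, Int.fract_add_floor]
  field_simp

lemma Psi_mem (hm0 : 0 < m) (hb : ∀ x, 1 ≤ sb h m x) {z : X × ℝ} (hz : z ∈ suspDom h) :
    Psi m z ∈ gD h m := by
  have hm' : (0 : ℝ) < m := by exact_mod_cast hm0
  have h1 : (Psi m z).1 ∈ cS X := ⟨Int.fract_nonneg _, Int.fract_lt_one _⟩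
  refine ⟨h1, (lt_sk hb h1 _).2 ?_⟩
  simp only [Psi]
  have h0 : 0 ≤ (m : ℝ) * z.2 := mul_nonneg hm'.le hz.1
  rw [natCast_floor_eq_intCast_floor h0, Int.fract_add_floor]
  exact mul_lt_mul_of_pos_left hz.2 hm'

lemma lint_unfold {G : ℝ → ENNReal} (hG : Measurable G) (h0 : ∀ u < 0, G u = 0) :
    ∫⁻ θ, ∑' j : ℕ, G (θ + j) ∂lam = ∫⁻ u, G u := by
  have hj : ∀ j : ℕ, Measurable fun θ : ℝ => G (θ + j) := fun j =>
    hG.comp (measurable_id.add_const _)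
  rw [lintegral_tsum (fun j => (hj j).aemeasurable)]
  have e1 : ∀ j : ℕ, ∫⁻ θ, G (θ + j) ∂lam = ∫⁻ u in Set.Ico (j : ℝ) (j + 1), G u := by
    intro j
    unfold lam
    rw [← lintegral_indicator measurableSet_Ico, ← lintegral_indicator measurableSet_Ico,
      ← lintegral_add_right_eq_self ((Set.Ico (j : ℝ) (j + 1)).indicator G) (j : ℝ)]
    refine lintegral_congr fun x => ?_
    simp only [Set.indicator, Set.mem_Ico]
    refine if_congr ?_ rfl rfl
    constructor <;> rintro ⟨h1, h2⟩ <;> constructor <;> linarith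
  simp_rw [e1]
  rw [← lintegral_iUnion (fun j => measurableSet_Ico)]
  · have : (⋃ j : ℕ, Set.Ico (j : ℝ) (j + 1)) = Set.Ici 0 := by
      ext u
      simp only [Set.mem_iUnion, Set.mem_Ico, Set.mem_Ici]
      constructor
      · rintro ⟨j, h1, h2⟩
        exact le_trans (Nat.cast_nonneg j) h1
      · intro hu
        exact ⟨⌊u⌋₊, Nat.floor_le hu, Nat.lt_floor_add_one u⟩
    rw [this, ← lintegral_indicator measurableSet_Ici]
    refine lintegral_congr fun u => ?_
    by_cases hu : 0 ≤ u
    · rw [Set.indicator_of_mem (Set.mem_Ici.2 hu)]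
    · rw [Set.indicator_of_notMem (fun hc => hu (Set.mem_Ici.1 hc)), h0 u (not_le.1 hu)]
  · intro i j hij
    rw [Function.onFun, Set.disjoint_left]
    rintro u ⟨a1, a2⟩ ⟨b1, b2⟩
    apply hij
    have c1 : (i : ℝ) < j + 1 := by linarith
    have c2 : (j : ℝ) < i + 1 := by linarith
    have c1' : i < j + 1 := by exact_mod_cast c1
    have c2' : j < i + 1 := by exact_mod_cast c2
    omega

lemma lint_scale (hm0 : 0 < m) {G : ℝ → ENNReal} (hG : Measurable G) :
    ∫⁻ u, G u = m * ∫⁻ r, G (m * r) := by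
  have hm' : (0 : ℝ) < m := by exact_mod_cast hm0
  have e := Real.map_volume_mul_left (a := (m : ℝ)) hm'.ne'
  rw [← lintegral_map hG (measurable_const_mul (m : ℝ)), e, lintegral_smul_measure]
  rw [abs_of_pos (by positivity), smul_eq_mul, ← mul_assoc,
    ENNReal.ofReal_inv_of_pos hm', ENNReal.ofReal_natCast, ENNReal.mul_inv_cancel, one_mul]
  · exact_mod_cast hm0.ne'
  · simp

lemma meas_suspDom (hm : Measurable h) : MeasurableSet (suspDom h) :=
  (measurableSet_le measurable_const measurable_snd).inter
    (measurableSet_lt measurable_snd (hm.comp measurable_fst))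

lemma map_Phi (hm : Measurable h) (hm0 : 0 < m) (hb : ∀ x, 1 ≤ sb h m x) :
    (tM (μt.prod lam) (sk h m)).map (Phi m) = (m : ENNReal) • (μt.prod volume).restrict (suspDom h) := by
  have hm' : (0 : ℝ) < m := by exact_mod_cast hm0
  refine Measure.ext_of_lintegral _ fun g hg => ?_
  rw [lintegral_map hg meas_Phi, lintegral_tM (meas_sk hm) (g := fun p => g (Phi m p)) (hg.comp meas_Phi),
    lintegral_smul_measure]
  set G : X × ℝ → ENNReal := (suspDom (sb h m)).indicator fun z => g (z.1, z.2 / m) with hGdef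
  have hG : Measurable G := by
    refine Measurable.indicator ?_ (meas_suspDom (meas_sb hm))
    exact hg.comp (measurable_fst.prodMk (measurable_snd.div_const _))
  have e1 : ∫⁻ y, ∑ j ∈ Finset.range (sk h m y), g (Phi m (y, j)) ∂(μt.prod lam) =
      ∫⁻ y, ∑' j : ℕ, G (y.1, y.2 + j) ∂(μt.prod lam) := by
    have h0 : ∀ᵐ y ∂(μt.prod lam), y ∈ cS X := cS_compl
    refine lintegral_congr_ae ?_
    filter_upwards [h0] with y hy
    rw [tsum_eq_sum (s := Finset.range (sk h m y))]
    · refine Finset.sum_congr rfl fun j hj => ?_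
      rw [Finset.mem_range, lt_sk hb hy] at hj
      rw [hGdef, Set.indicator_of_mem]
      · rfl
      · have h0 : 0 ≤ y.2 := hy.1
        exact ⟨by simp only; positivity, hj⟩
    · intro j hj
      rw [Finset.mem_range, lt_sk hb hy] at hj
      rw [hGdef, Set.indicator_of_notMem]
      exact fun h => hj h.2
  have hGt : Measurable fun y : X × ℝ => ∑' j : ℕ, G (y.1, y.2 + j) := by
    refine Measurable.ennreal_tsum fun j => ?_
    exact hG.comp (measurable_fst.prodMk (measurable_snd.add_const _))
  rw [e1, lintegral_prod _ hGt.aemeasurable, ← lintegral_indicator (meas_suspDom hm),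
    lintegral_prod _ (hg.indicator (meas_suspDom hm)).aemeasurable, smul_eq_mul,
    ← lintegral_const_mul']
  · refine lintegral_congr fun x => ?_
    have hGx : Measurable fun u => G (x, u) := hG.comp (measurable_const.prodMk measurable_id)
    simp only
    rw [lint_unfold hGx, lint_scale hm0 hGx]
    · congr 1
      refine lintegral_congr fun r => ?_
      have : (x, (m : ℝ) * r) ∈ suspDom (sb h m) ↔ (x, r) ∈ suspDom h := by
        simp only [suspDom, sb, Set.mem_ofPred_eq]
        rw [mul_nonneg_iff_of_pos_left hm', mul_lt_mul_iff_right₀ hm']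
      by_cases hr : (x, r) ∈ suspDom h
      · rw [hGdef, Set.indicator_of_mem (this.2 hr), Set.indicator_of_mem hr]
        simp only
        rw [mul_div_cancel_left₀ _ hm'.ne']
      · rw [hGdef, Set.indicator_of_notMem (fun h => hr (this.1 h)), Set.indicator_of_notMem hr]
    · intro u hu
      rw [hGdef, Set.indicator_of_notMem]
      exact fun h => absurd h.1 (not_le.2 hu)
  · simp

lemma sk_int (hint : Integrable h μt) (hb : ∀ x, 1 ≤ sb h m x) :
    ∫⁻ y, sk h m y ∂(μt.prod lam) ≠ ⊤ := by
  have h1 : Integrable (fun x => sb h m x + 1) μt := (hint.const_mul _).add (integrable_const _)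
  have h2 : Integrable (fun y : X × ℝ => sb h m y.1 + 1) (μt.prod lam) := h1.comp_fst lam
  refine ne_of_lt (lt_of_le_of_lt ?_ h2.lintegral_lt_top)
  have h0 : ∀ᵐ y ∂(μt.prod lam), y ∈ cS X := cS_compl
  refine lintegral_mono_ae ?_
  filter_upwards [h0] with y hy
  have hl : sk h m y - 1 < sk h m y := by have := sk_pos (h := h) (m := m) y; omega
  have h3 := (lt_sk hb hy _).1 hl
  rw [Nat.cast_sub (sk_pos y)] at h3
  have h4 : (sk h m y : ℝ) ≤ sb h m y.1 + 1 := by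
    have := hy.1
    push_cast at h3
    linarith
  rw [← ENNReal.ofReal_natCast]
  exact ENNReal.ofReal_le_ofReal h4

end Final
end Abr

open Abr

/-- Abramov's entropy formula: for the suspension flow `S^t` over `(X, σ, μt)` with
integrable ceiling `h ≥ α > 0`, the entropy of the time-one map of the suspension flow
with respect to the suspended measure equals `h_{μt}(σ) / ∫ h dμt`. -/
theorem abramov_entropy_formula_suspension
    {X : Type*} [MeasurableSpace X]
    (μt : Measure X) [IsProbabilityMeasure μt]
    (σ : X → X) (hσbij : Function.Bijective σ) (hσ : MeasurePreserving σ μt μt)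
    (h : X → ℝ) (hmeas : Measurable h)
    (α : ℝ) (hα : 0 < α) (hge : ∀ x, α ≤ h x)
    (hint : Integrable h μt) :
    ∀ S : X × ℝ → X × ℝ, Measurable S → IsSuspMap σ h 1 S →
      ksEntropy (suspMeasure μt h) S = ksEntropy μt σ / ∫ x, h x ∂μt := by
  intro S hSm hS
  obtain ⟨m, hm⟩ := exists_nat_gt (1 / α)
  have hm' : (0 : ℝ) < m := lt_trans (by positivity) hm
  have hm0 : 0 < m := by exact_mod_cast hm'
  have hpos : ∀ x, 0 < h x := fun x => lt_of_lt_of_le hα (hge x)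
  have hb : ∀ x, 1 ≤ sb h m x := by
    intro x
    rw [div_lt_iff₀ hα] at hm
    have := hge x
    unfold sb
    nlinarith
  set ν := μt.prod lam with hν
  set F := cF σ (sb h m) with hFd
  have hF : MeasurePreserving F ν ν := mp_cF hσ (meas_sb hmeas)
  have hk := meas_sk (m := m) hmeas
  have hki := sk_int (m := m) hint hb
  have hfin : IsFiniteMeasure (tM ν (sk h m)) := finite_tM hk hki
  set τ := tM ν (sk h m) with hτ
  set T := tT F (sk h m) with hTd
  have hT : MeasurePreserving T τ τ := mp_tT hF hk sk_pos
  have hTm := hT.iterate m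
  have hD : τ (gD h m)ᶜ = 0 := gD_compl hmeas
  have hDae : ∀ᵐ p ∂τ, p ∈ gD h m := hD
  have hDT : ∀ p ∈ gD h m, T^[m] p ∈ gD h m := by
    intro p hp
    obtain ⟨n, h1, -⟩ := gD_iter (σ := σ) hb p hp m
    exact h1
  have hc : ∀ p ∈ gD h m, Phi m (T^[m] p) = S (Phi m p) := fun p hp => conj hm0 hb hpos hS hp
  have hmap := map_Phi (μt := μt) hmeas hm0 hb
  have hent : ent (τ.map (Phi m)) S = ent τ T^[m] := by
    apply le_antisymm
    · exact ent_factor_le hTm meas_Phi hSm hD hDT hc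
    · have hSmp : MeasurePreserving S (τ.map (Phi m)) (τ.map (Phi m)) := by
        refine ⟨hSm, ?_⟩
        rw [Measure.map_map hSm meas_Phi]
        have : S ∘ Phi m =ᵐ[τ] Phi m ∘ T^[m] := by
          filter_upwards [hDae] with p hp
          exact (hc p hp).symm
        rw [Measure.map_congr this, ← Measure.map_map meas_Phi hTm.measurable, hTm.map_eq]
      have := ent_factor_le (μ := τ.map (Phi m)) (T := S) (π := Psi m) (S := T^[m])
        (D := suspDom h) hSmp meas_Psi hTm.measurable ?_ ?_ ?_
      · rw [Measure.map_map meas_Psi meas_Phi] at this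
        have e : Psi m ∘ Phi m =ᵐ[τ] id := by
          filter_upwards [hDae] with p hp
          exact Psi_Phi hm0 hp
        rwa [Measure.map_congr e, Measure.map_id] at this
      · rw [hmap, Measure.smul_apply, Measure.restrict_apply (meas_suspDom hmeas).compl]
        simp
      · intro z hz
        have hz' := Psi_mem hm0 hb hz
        rw [← Phi_Psi hm0 hz, ← hc _ hz']
        exact Phi_mem hm0 hb (hDT _ hz')
      · intro z hz
        have hz' := Psi_mem hm0 hb hz
        conv_lhs => rw [← Phi_Psi hm0 hz, ← hc _ hz']
        exact Psi_Phi hm0 (hDT _ hz')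
  rw [ent_pow hT hm0, ent_tower hF hk sk_pos hki, ent_ext hσ (meas_sb hmeas)] at hent
  -- the total mass
  have hIpos : 0 < ∫ x, h x ∂μt := by
    have : ∫ _, α ∂μt ≤ ∫ x, h x ∂μt := integral_mono (integrable_const _) hint hge
    simp at this
    linarith
  have hmass : (μt.prod volume) (suspDom h) = ENNReal.ofReal (∫ x, h x ∂μt) := by
    rw [Measure.prod_apply (meas_suspDom hmeas),
      ofReal_integral_eq_lintegral_ofReal hint (Filter.Eventually.of_forall fun x => (hpos x).le)]
    refine lintegral_congr fun x => ?_
    have : Prod.mk x ⁻¹' suspDom h = Set.Ico 0 (h x) := by ext r; rfl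
    rw [this, Real.volume_Ico, sub_zero]
  set c := (ENNReal.ofReal (∫ x, h x ∂μt))⁻¹ with hcdef
  have hI0 : ENNReal.ofReal (∫ x, h x ∂μt) ≠ 0 := by simpa using hIpos
  have hctop : c ≠ ⊤ := ENNReal.inv_ne_top.2 hI0
  have hm00 : (m : ENNReal) ≠ 0 := by exact_mod_cast hm0.ne'
  have hms : suspMeasure μt h = (c * (m : ENNReal)⁻¹) • τ.map (Phi m) := by
    rw [hmap, smul_smul, mul_assoc, ENNReal.inv_mul_cancel hm00 (by simp), mul_one]
    rfl
  have hprob : IsProbabilityMeasure (suspMeasure μt h) := by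
    refine ⟨?_⟩
    unfold suspMeasure
    rw [Measure.smul_apply, Measure.restrict_apply_univ, hmass, smul_eq_mul,
      ENNReal.inv_mul_cancel hI0 ENNReal.ofReal_ne_top]
  have hSmp : MeasurePreserving S (suspMeasure μt h) (suspMeasure μt h) := by
    refine ⟨hSm, ?_⟩
    rw [hms, Measure.map_smul, Measure.map_map hSm meas_Phi]
    have : S ∘ Phi m =ᵐ[τ] Phi m ∘ T^[m] := by
      filter_upwards [hDae] with p hp
      exact (hc p hp).symm
    rw [Measure.map_congr this, ← Measure.map_map meas_Phi hTm.measurable, hTm.map_eq]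
  have hfinal : ent (suspMeasure μt h) S = c * ent μt σ := by
    rw [hms, ent_smul (ENNReal.mul_ne_top hctop (ENNReal.inv_ne_top.2 hm00)), hent, ← mul_assoc,
      mul_assoc c, ENNReal.inv_mul_cancel hm00 (by simp), mul_one]
  rw [ksEntropy_eq hSmp, ksEntropy_eq hσ, hfinal, ENNReal.toReal_mul, hcdef, ENNReal.toReal_inv,
    ENNReal.toReal_ofReal hIpos.le, div_eq_mul_inv, mul_comm]
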